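/- Let d ≥ 7 be an odd integer and let p be a prime with p ≥ d^2 and p ≡ ±2 (mod d^2 - 3d + 3). Let R_p = k[x,y,z]/(x^{d-1}y + y^{d-1}z + z^{d-1}x) over an algebraically closed field k of characteristic p, with graded maximal ideal m = (x, y, z). Then the F-threshold c^m(m) = (3pd + d^2 - 9d + 15)/(2pd); in particular, in lowest terms the denominator of c^m(m) is divisible by p but need not be a power of p. -/

import Mathlib

/-! Common definitions: F-thresholds. -/

open Filter

/-- The Frobenius bracket power `J^{[q]}`. -/
def frobeniusPower {R : Type*} [CommRing R] (J : Ideal R) (q : ℕ) : Ideal R :=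
  Ideal.span ((fun x => x ^ q) '' (J : Set R))

/-- `ν_I^J(q) = max { r | I^r ⊄ J^{[q]} }`. -/
noncomputable def fthresholdNu {R : Type*} [CommRing R] (I J : Ideal R) (q : ℕ) : ℕ :=
  sSup {r : ℕ | ¬ I ^ r ≤ frobeniusPower J q}

/-- `c` is the `F`-threshold `c^J(I) = lim_{e → ∞} ν_I^J(p^e)/p^e`. -/
def HasFThreshold {R : Type*} [CommRing R] (p : ℕ) (I J : Ideal R) (c : ℝ) : Prop :=
  Filter.Tendsto (fun e : ℕ => (fthresholdNu I J (p ^ e) : ℝ) / (p : ℝ) ^ e)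
    Filter.atTop (nhds c)


open MvPolynomial in
/-- The polynomial `h = x^{d-1} y + y^{d-1} z + z^{d-1} x`. -/
noncomputable def trivediPolynomial (d : ℕ) (k : Type) [Field k] :
    MvPolynomial (Fin 3) k :=
  X 0 ^ (d - 1) * X 1 + X 1 ^ (d - 1) * X 2 + X 2 ^ (d - 1) * X 0

/-- The ring `R_p = k[x,y,z]/(x^{d-1} y + y^{d-1} z + z^{d-1} x)`. -/
def TrivediRing (d : ℕ) (k : Type) [Field k] : Type :=
  MvPolynomial (Fin 3) k ⧸ Ideal.span {trivediPolynomial d k}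

noncomputable instance (d : ℕ) (k : Type) [Field k] : CommRing (TrivediRing d k) :=
  Ideal.Quotient.commRing _

/-- The graded maximal ideal `𝐦 = (x, y, z)` of `R_p`. -/
noncomputable def trivediMaxIdeal (d : ℕ) (k : Type) [Field k] :
    Ideal (TrivediRing d k) :=
  Ideal.span (Set.range fun i : Fin 3 =>
    Ideal.Quotient.mk (Ideal.span {trivediPolynomial d k}) (MvPolynomial.X i))

/-!
Write `e = d - 1`, `N = e² - e + 1 = d² - 3d + 3` and `h = x^e y + y^e z + z^e x`. For
`q = p^(j+1)` the number `ν(q)` is the largest `r` such that some monomial of degree `r` lies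
outside `(x^q, y^q, z^q, h)`, and it is computed up to a bounded error.

*Reduction to two variables.* To the exponent vector `v` attach the weights `a = e v₀ + v₁`,
`b = e v₁ + v₂`, `c = e v₂ + v₀`. Multiplying a monomial by one of the three terms of `h` has the
same effect on the weights modulo `N`, and the three effects differ by `N` in one weight. Hence the
linear map which sends a monomial to `s^⌊a/N⌋ t^⌊b/N⌋ u^⌊c/N⌋` in `k[s, t, u]/(s + t + u)` kills the
multiples of `h`, and on polynomials of one degree with fixed weights modulo `N` its kernel is
exactly the multiples of `h`. Multiples of `x^q`, `y^q`, `z^q` go to multiples of `s^i u^q₁`,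
`t^i s^q₁`, `u^i t^q₁`, where `i = ⌊eq/N⌋` and `q₁ = ⌊q/N⌋`, so everything depends on the syzygies
of these three binary forms.

*The basic syzygy.* The congruence gives `p ∓ 2 = m N`, and `n = m (e - 1)` is odd. Writing
`3 n = 2 D + 1`, a dimension count yields a relation of degree `D` between multiples of `s^n`, `t^n`
and `u^n`, and the Mason–Stothers theorem, available because `D < p`, shows that it is as
nondegenerate as possible. Its `p^j`-th power is a relation between multiples of the powers with
exponent `n p^j = (e - 1)(q ∓ 2 p^j)/N`, which is close to `i - q₁ ≈ (e - 1) q/N`; this discrepancy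
is what produces the second order term of `ν`.

*Lower bound.* The multiples of the power of the basic syzygy are so many syzygies of the three
forms that these cannot generate all forms of a degree that is too small, as they would if all
monomials of the corresponding degree were in `(x^q, y^q, z^q, h)`.

*Upper bound.* In small degree a relation between multiples of the three forms must be a multiple
of the power of the basic syzygy, and then it is zero. By Macaulay duality in
`k[x, y, z]/(x^q, y^q, z^q)` this implies that monomials of large degree lie in
`(x^q, y^q, z^q, h)`.

The two bounds agree up to a constant: `2 d ν(q) = 3 d q + (d² - 9d + 15) p^j + O(1)`, which gives
the limit. Since `0 < d² - 9d + 15 < p`, the factor `p` of the denominator does not cancel.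
-/

namespace Trivedi

section BinaryForms

open Polynomial

/-- The linear form `u = -(s + t)`. Binary forms in `s`, `t` are dehomogenized throughout: `s = X`
and `t = 1`. -/
noncomputable def linU (k : Type*) [Field k] : k[X] := -(1 + X)

variable {k : Type*} [Field k]

lemma linU_eq_neg : linU k = -(X - C (-1)) := by
  simp only [linU, map_neg, map_one]; ring

lemma X_add_one_add_linU : (X : k[X]) + 1 + linU k = 0 := by
  rw [linU]; ring

lemma natDegree_linU : (linU k).natDegree = 1 := by
  rw [linU_eq_neg, natDegree_neg, natDegree_X_sub_C]

lemma prime_linU : Prime (linU k) := by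
  rw [linU_eq_neg]; exact (prime_X_sub_C (-1)).neg

lemma isCoprime_X_linU : IsCoprime (X : k[X]) (linU k) :=
  ⟨-1, -1, by rw [linU]; ring⟩

/-- The binary form `s ^ a 0 * t ^ a 1 * u ^ a 2`, at `t = 1`. -/
noncomputable def stu (k : Type*) [Field k] (a : Fin 3 → ℕ) : k[X] := X ^ a 0 * linU k ^ a 2

lemma stu_zero : stu k 0 = 1 := by simp [stu]

lemma stu_add (a b : Fin 3 → ℕ) : stu k (a + b) = stu k a * stu k b := by
  simp only [stu, Pi.add_apply, pow_add]; ring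

lemma stu_ne_zero (a : Fin 3 → ℕ) : stu k a ≠ 0 :=
  mul_ne_zero (pow_ne_zero _ X_ne_zero) (pow_ne_zero _ prime_linU.ne_zero)

lemma natDegree_stu (a : Fin 3 → ℕ) : (stu k a).natDegree = a 0 + a 2 := by
  rw [stu, natDegree_mul (pow_ne_zero _ X_ne_zero) (pow_ne_zero _ prime_linU.ne_zero),
    natDegree_pow, natDegree_pow, natDegree_X, natDegree_linU, mul_one, mul_one]

/-- The binary forms of degree `l` divisible by `s ^ a 0`, `t ^ a 1` and `u ^ a 2`. As `t = 1`,
the order at `t` is the difference between `l` and the degree of the polynomial. -/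
noncomputable def forms (k : Type*) [Field k] (l : ℕ) (a : Fin 3 → ℕ) : Submodule k k[X] :=
  (Ideal.span {X ^ a 0}).restrictScalars k ⊓ (Ideal.span {linU k ^ a 2}).restrictScalars k ⊓
    degreeLT k (l + 1 - a 1)

variable {l l' : ℕ} {a b : Fin 3 → ℕ} {f g : k[X]}

lemma mem_forms : g ∈ forms k l a ↔
    X ^ a 0 ∣ g ∧ linU k ^ a 2 ∣ g ∧ (g ≠ 0 → g.natDegree + a 1 ≤ l) := by
  simp only [forms, Submodule.mem_inf, Submodule.restrictScalars_mem, Ideal.mem_span_singleton,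
    mem_degreeLT, and_assoc]
  refine and_congr_right fun _ => and_congr_right fun _ => ?_
  rcases eq_or_ne g 0 with rfl | hg
  · simp
  · rw [← natDegree_lt_iff_degree_lt hg]
    simp only [hg, ne_eq, not_false_eq_true, forall_const]
    omega

lemma mem_forms_zero_iff : g ∈ forms k l 0 ↔ g.natDegree ≤ l := by
  simp only [mem_forms, Pi.zero_apply, pow_zero, one_dvd, true_and, add_zero]
  rcases eq_or_ne g 0 with rfl | hg <;> simp [*]

lemma forms_antitone : Antitone (forms k l) := fun a b hab g hg => by
  rw [mem_forms] at hg ⊢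
  exact ⟨(pow_dvd_pow _ (hab 0)).trans hg.1, (pow_dvd_pow _ (hab 2)).trans hg.2.1, fun h =>
    (Nat.add_le_add_left (hab 1) _).trans (hg.2.2 h)⟩

lemma forms_le_forms_zero : forms k l a ≤ forms k l 0 := forms_antitone fun _ => Nat.zero_le _

lemma mem_forms_sup (ha : g ∈ forms k l a) (hb : g ∈ forms k l b) : g ∈ forms k l (a ⊔ b) := by
  rw [mem_forms] at ha hb ⊢
  refine ⟨?_, ?_, fun h => ?_⟩
  · rcases le_total (a 0) (b 0) with h | h <;> simp [h, ha.1, hb.1]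
  · rcases le_total (a 2) (b 2) with h | h <;> simp [h, ha.2.1, hb.2.1]
  · have := ha.2.2 h
    have := hb.2.2 h
    rw [Pi.sup_apply]
    omega

lemma mem_forms_of_forall_single (h : ∀ m, g ∈ forms k l (Pi.single m (a m))) :
    g ∈ forms k l a := by
  simp only [mem_forms] at h
  rw [mem_forms]
  refine ⟨?_, ?_, ?_⟩
  · simpa using (h 0).1
  · simpa using (h 2).2.1
  · simpa using (h 1).2.2

lemma mul_mem_forms (hf : f ∈ forms k l a) (hg : g ∈ forms k l' b) :
    f * g ∈ forms k (l + l') (a + b) := by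
  rw [mem_forms] at hf hg ⊢
  refine ⟨?_, ?_, fun h => ?_⟩
  · rw [Pi.add_apply, pow_add]; exact mul_dvd_mul hf.1 hg.1
  · rw [Pi.add_apply, pow_add]; exact mul_dvd_mul hf.2.1 hg.2.1
  · obtain ⟨hf0, hg0⟩ := mul_ne_zero_iff.1 h
    have := hf.2.2 hf0
    have := hg.2.2 hg0
    rw [natDegree_mul hf0 hg0, Pi.add_apply]
    omega

lemma stu_mem_forms (h : ∑ i, a i ≤ l) : stu k a ∈ forms k l a := by
  rw [Fin.sum_univ_three] at h
  refine mem_forms.2 ⟨dvd_mul_right _ _, dvd_mul_left _ _, fun _ => ?_⟩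
  rw [natDegree_stu]
  omega

lemma forms_eq_map : forms k l a =
    (degreeLT k (l + 1 - ∑ i, a i)).map (LinearMap.mulLeft k (stu k a)) := by
  have hdeg (g : k[X]) : (stu k a * g ≠ 0 →
      (stu k a * g).natDegree + a 1 ≤ l) ↔ g ∈ degreeLT k (l + 1 - ∑ i, a i) := by
    rcases eq_or_ne g 0 with rfl | hg
    · simp
    rw [mem_degreeLT, ← natDegree_lt_iff_degree_lt hg, natDegree_mul (stu_ne_zero a) hg,
      natDegree_stu, Fin.sum_univ_three]
    simp only [mul_ne_zero (stu_ne_zero a) hg, ne_eq, not_false_eq_true, forall_const]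
    omega
  ext g
  simp only [mem_forms, Submodule.mem_map, LinearMap.mulLeft_apply]
  constructor
  · rintro ⟨h0, h2, h1⟩
    obtain ⟨q, rfl⟩ := isCoprime_X_linU.pow.mul_dvd h0 h2
    exact ⟨q, (hdeg q).1 h1, rfl⟩
  · rintro ⟨q, hq, rfl⟩
    exact ⟨Dvd.intro _ (mul_assoc _ _ _).symm,
      (dvd_mul_left _ _).mul_right _, (hdeg q).2 hq⟩

lemma forms_zero : forms k l 0 = degreeLT k (l + 1) := by simp [forms]

lemma exists_eq_stu_mul (hg : g ∈ forms k (l + ∑ i, a i) a) :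
    ∃ h ∈ forms k l 0, g = stu k a * h := by
  rw [forms_eq_map, add_right_comm, Nat.add_sub_cancel, ← forms_zero] at hg
  obtain ⟨h, hh, rfl⟩ := hg
  exact ⟨h, hh, rfl⟩

instance : FiniteDimensional k (forms k l a) :=
  Submodule.finiteDimensional_of_le (inf_le_right : forms k l a ≤ degreeLT k (l + 1 - a 1))

lemma finrank_forms : Module.finrank k (forms k l a) = l + 1 - ∑ i, a i := by
  have hinj : Function.Injective (LinearMap.mulLeft k (stu k a)) :=
    mul_right_injective₀ (stu_ne_zero a)
  rw [forms_eq_map, ← (Submodule.equivMapOfInjective _ hinj _).finrank_eq,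
    (degreeLTEquiv k _).finrank_eq, Module.finrank_fin_fun]

lemma forms_eq_bot (h : l < ∑ i, a i) : forms k l a = ⊥ := by
  rw [← Submodule.finrank_eq_zero (R := k), finrank_forms]
  omega

/-- `HasOrders D a f` says that `f ≠ 0` is a form of degree `D` whose orders at `s`, `t`, `u` are
exactly `a 0`, `a 1`, `a 2`. -/
structure HasOrders (D : ℕ) (a : Fin 3 → ℕ) (f : k[X]) : Prop where
  emultiplicity_X : emultiplicity X f = a 0
  natDegree_add : f.natDegree + a 1 = D
  emultiplicity_linU : emultiplicity (linU k) f = a 2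

variable {D : ℕ}

lemma HasOrders.of_notMem (hf : f ∈ forms k D a)
    (h : ∀ m, f ∉ forms k D (a + Pi.single m 1)) : HasOrders D a f := by
  have hmem := mem_forms.1 hf
  have hne : f ≠ 0 := by rintro rfl; exact h 0 (zero_mem _)
  have h0 := h 0
  have h1 := h 1
  have h2 := h 2
  simp only [mem_forms, Pi.add_apply, Pi.single_apply] at h0 h1 h2
  refine ⟨emultiplicity_eq_coe.2 ⟨hmem.1, ?_⟩, ?_, emultiplicity_eq_coe.2 ⟨hmem.2.1, ?_⟩⟩
  · simpa [hmem.2.1, hne, hmem.2.2 hne] using h0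
  · have := hmem.2.2 hne
    have : D < f.natDegree + (a 1 + 1) := by simpa [hmem.1, hmem.2.1, hne] using h1
    omega
  · simpa [hmem.1, hne, hmem.2.2 hne] using h2

namespace HasOrders

lemma ne_zero (hf : HasOrders D a f) : f ≠ 0 := by
  rintro rfl
  simpa using hf.emultiplicity_X

lemma mem_forms (hf : HasOrders D a f) : f ∈ forms k D a :=
  Trivedi.mem_forms.2 ⟨pow_dvd_of_le_emultiplicity hf.emultiplicity_X.ge,
    pow_dvd_of_le_emultiplicity hf.emultiplicity_linU.ge, fun _ => hf.natDegree_add.le⟩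

lemma pow (hf : HasOrders D a f) (w : ℕ) : HasOrders (w * D) (w • a) (f ^ w) where
  emultiplicity_X := by
    rw [emultiplicity_pow prime_X, hf.emultiplicity_X]; simp
  natDegree_add := by
    rw [natDegree_pow, Pi.smul_apply, smul_eq_mul, ← mul_add, hf.natDegree_add]
  emultiplicity_linU := by
    rw [emultiplicity_pow prime_linU, hf.emultiplicity_linU]; simp

lemma mem_forms_of_mul_mem (hf : HasOrders D a f) (hab : a 1 ≤ b 1)
    (hg : g * f ∈ forms k (l + D) b) : g ∈ forms k l (b - a) := by
  rw [Trivedi.mem_forms] at hg ⊢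
  have key {π : k[X]} {m n : ℕ} (hπ : Prime π) (hm : emultiplicity π f = m) (hn : π ^ n ∣ g * f) :
      π ^ (n - m) ∣ g := by
    rw [pow_dvd_iff_le_emultiplicity, emultiplicity_mul hπ, hm] at hn
    rw [pow_dvd_iff_le_emultiplicity, ENat.natCast_sub]
    exact tsub_le_iff_right.2 hn
  refine ⟨key prime_X hf.emultiplicity_X hg.1, key prime_linU hf.emultiplicity_linU hg.2.1,
    fun h => ?_⟩
  have hdeg := hg.2.2 (mul_ne_zero h hf.ne_zero)
  rw [natDegree_mul h hf.ne_zero, ← hf.natDegree_add] at hdeg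
  rw [Pi.sub_apply]
  omega

end HasOrders

end BinaryForms

section Mason

open Polynomial UniqueFactorizationMonoid

variable {k : Type*} [Field k]

lemma natDegree_eq_zero_of_derivative_eq_zero {R : Type*} [Semiring R] [NoZeroDivisors R] {p : ℕ}
    [CharP R p] {f : R[X]}
    (hf : derivative f = 0) (hlt : f.natDegree < p) : f.natDegree = 0 := by
  by_contra hne
  obtain ⟨n, hn⟩ := Nat.exists_eq_succ_of_ne_zero hne
  have hcoeff : f.coeff (n + 1) * (n + 1) = 0 := by
    rw [← coeff_derivative, hf, coeff_zero]
  have hlead : f.coeff (n + 1) ≠ 0 := by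
    rw [← Nat.succ_eq_add_one, ← hn, coeff_natDegree, leadingCoeff_ne_zero]
    rintro rfl
    simp at hne
  have hcast : ((n + 1 : ℕ) : R) = 0 := by
    exact_mod_cast (mul_eq_zero.1 hcoeff).resolve_left hlead
  have := Nat.le_of_dvd n.succ_pos ((CharP.cast_eq_zero_iff R p _).1 hcast)
  omega

lemma natDegree_radical_add_le [DecidableEq k] {π f : k[X]} {a : ℕ} (hπ : π.natDegree = 1)
    (hf : f ≠ 0) (h : π ^ a ∣ f) : (radical f).natDegree + a ≤ f.natDegree + 1 := by
  obtain ⟨g, rfl⟩ := h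
  have hg : g ≠ 0 := right_ne_zero_of_mul hf
  have hπ0 : π ≠ 0 := by rintro rfl; simp at hπ
  have hdvd : radical (π ^ a * g) ∣ π * g :=
    radical_mul_dvd.trans
      (mul_dvd_mul (radical_pow_dvd.trans radical_dvd_self) radical_dvd_self)
  have hle := natDegree_le_of_dvd hdvd (mul_ne_zero hπ0 hg)
  rw [natDegree_mul hπ0 hg, hπ] at hle
  rw [natDegree_mul (pow_ne_zero _ hπ0) hg, natDegree_pow, hπ]
  omega

lemma mason_of_isCoprime {p : ℕ} [CharP k p] {f g h : k[X]} {a c : ℕ} (hf : f ≠ 0) (hg : g ≠ 0)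
    (hh : h ≠ 0) (hcop : IsCoprime f g) (hsum : f + g + h = 0) (ha : X ^ a ∣ f)
    (hc : linU k ^ c ∣ h) (hfp : f.natDegree < p) (hhp : h.natDegree < p) :
    a + c ≤ g.natDegree + h.natDegree + 1 := by
  classical
  have hrf := natDegree_radical_add_le natDegree_X hf ha
  have hrh := natDegree_radical_add_le natDegree_linU hh hc
  have hrg : (radical g).natDegree ≤ g.natDegree := natDegree_le_of_dvd radical_dvd_self hg
  rcases Polynomial.abc hf hg hh hcop hsum with ⟨habc, -⟩ | ⟨hf', -, hh'⟩
  · have hrad : (radical (f * g * h)).natDegree ≤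
        (radical f * radical g * radical h).natDegree :=
      natDegree_le_of_dvd (radical_mul_dvd.trans (mul_dvd_mul_right radical_mul_dvd _))
        (mul_ne_zero (mul_ne_zero radical_ne_zero radical_ne_zero) radical_ne_zero)
    have := hrad.trans (natDegree_mul_le.trans (Nat.add_le_add_right natDegree_mul_le _))
    omega
  · -- Below degree `p` the exceptional case of Mason–Stothers only consists of constants.
    have hf0 := natDegree_eq_zero_of_derivative_eq_zero hf' hfp
    have hh0 := natDegree_eq_zero_of_derivative_eq_zero hh' hhp
    have ha0 := natDegree_le_of_dvd ha hf
    have hc0 := natDegree_le_of_dvd hc hh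
    rw [natDegree_pow, natDegree_X, hf0] at ha0
    rw [natDegree_pow, natDegree_linU, hh0] at hc0
    omega

lemma multiplicity_X_add_multiplicity_linU_le {G : k[X]} (hG : G ≠ 0) :
    multiplicity X G + multiplicity (linU k) G ≤ G.natDegree := by
  have hdvd := natDegree_le_of_dvd
    (isCoprime_X_linU.pow.mul_dvd (pow_multiplicity_dvd _ _) (pow_multiplicity_dvd _ _)) hG
  rwa [natDegree_mul (pow_ne_zero _ X_ne_zero) (pow_ne_zero _ prime_linU.ne_zero), natDegree_pow,
    natDegree_pow, natDegree_X, natDegree_linU, mul_one, mul_one] at hdvd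

lemma pow_sub_multiplicity_dvd_of_pow_dvd_mul {M : Type*} [CommMonoidWithZero M]
    [IsCancelMulZero M] [WfDvdMonoid M] {π G f : M} {a : ℕ} (hπ : Prime π) (hG : G ≠ 0)
    (h : π ^ a ∣ G * f) : π ^ (a - multiplicity π G) ∣ f := by
  rw [pow_dvd_iff_le_emultiplicity, emultiplicity_mul hπ,
    (FiniteMultiplicity.of_prime_left hπ hG).emultiplicity_eq_multiplicity] at h
  rw [pow_dvd_iff_le_emultiplicity, ENat.natCast_sub]
  exact tsub_le_iff_left.2 h

lemma mason_of_isCoprime_mul {p : ℕ} [CharP k p] {G f g h : k[X]} {a c : ℕ} (hG : G ≠ 0)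
    (hf : f ≠ 0) (hg : g ≠ 0) (hh : h ≠ 0) (hcop : IsCoprime f g) (hsum : f + g + h = 0)
    (ha : X ^ a ∣ G * f) (hc : linU k ^ c ∣ G * h) (hfp : (G * f).natDegree < p)
    (hhp : (G * h).natDegree < p) :
    a + c + G.natDegree ≤ (G * g).natDegree + (G * h).natDegree + 1 := by
  rw [natDegree_mul hG ‹_›] at hfp hhp
  have hmason := mason_of_isCoprime hf hg hh hcop hsum
    (pow_sub_multiplicity_dvd_of_pow_dvd_mul prime_X hG ha)
    (pow_sub_multiplicity_dvd_of_pow_dvd_mul prime_linU hG hc) (by omega) (by omega)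
  have := multiplicity_X_add_multiplicity_linU_le hG
  rw [natDegree_mul hG hg, natDegree_mul hG hh]
  omega

variable {p D T : ℕ} {n : Fin 3 → ℕ} {f : Fin 3 → k[X]}

/-- The orders along which a relation `f 0 + f 1 + f 2 = 0` between forms of degree `D` vanishes are
bounded by Mason–Stothers; a common factor, or a common power `t ^ (D - T)`, sharpens the bound. -/
lemma mason_forms [CharP k p] (hsum : ∑ j, f j = 0) (hne : ∀ j, f j ≠ 0)
    (hf : ∀ j, f j ∈ forms k D (Pi.single j (n j))) (hT : ∀ j, (f j).natDegree ≤ T) (hTp : T < p)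
    {z : k[X]} (hz0 : z ∣ f 0) (hz1 : z ∣ f 1) : ∑ j, n j + z.natDegree ≤ D + T + 1 := by
  obtain ⟨f₀, f₁, G, hrel, e0, e1⟩ :=
    UniqueFactorizationMonoid.exists_reduced_factors (f 0) (hne 0) (f 1)
  have hcop : IsCoprime f₀ f₁ := hrel.isCoprime
  have e2 : G * -(f₀ + f₁) = f 2 := by
    rw [Fin.sum_univ_three] at hsum; linear_combination -hsum - e0 - e1
  obtain ⟨hG, hf₀⟩ := mul_ne_zero_iff.1 (e0 ▸ hne 0)
  have hf₁ := right_ne_zero_of_mul (e1 ▸ hne 1)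
  have hf₂ := right_ne_zero_of_mul (e2 ▸ hne 2)
  have hzG : z ∣ G := by
    obtain ⟨r, s, hrs⟩ := hcop
    have : G = r * f 0 + s * f 1 := by rw [← e0, ← e1]; linear_combination -G * hrs
    exact this ▸ dvd_add (hz0.mul_left _) (hz1.mul_left _)
  have hmason := mason_of_isCoprime_mul (a := n 0) (c := n 2) hG hf₀ hf₁ hf₂ hcop (by ring)
    (e0 ▸ (mem_forms.1 (hf 0)).1) (e2 ▸ (mem_forms.1 (hf 2)).2.1)
    (e0 ▸ (hT 0).trans_lt hTp) (e2 ▸ (hT 2).trans_lt hTp)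
  rw [e1, e2] at hmason
  have hdeg1 := (mem_forms.1 (hf 1)).2.2 (hne 1)
  rw [Pi.single_eq_same] at hdeg1
  have := natDegree_le_of_dvd hzG hG
  have := hT 2
  rw [Fin.sum_univ_three]
  omega

end Mason

section SumMap

variable {k V ι : Type*} [Field k] [AddCommGroup V] [Module k V] [Fintype ι]

/-- The map `(x j) ↦ ∑ j, x j` from the product of a family of subspaces; its kernel consists of the
linear relations between elements of these subspaces. -/
def sumMap (A : ι → Submodule k V) : (∀ j, A j) →ₗ[k] V :=
  ∑ j, (A j).subtype ∘ₗ LinearMap.proj j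

variable {A : ι → Submodule k V}

lemma sumMap_apply (x : ∀ j, A j) : sumMap A x = ∑ j, (x j : V) := by
  simp [sumMap]

lemma range_sumMap : LinearMap.range (sumMap A) = ⨆ j, A j := by
  classical
  apply le_antisymm
  · rintro _ ⟨x, rfl⟩
    rw [sumMap_apply]
    exact sum_mem fun j _ => le_iSup A j (x j).2
  · refine iSup_le fun j v hv => ⟨Pi.single j ⟨v, hv⟩, ?_⟩
    rw [sumMap_apply, Finset.sum_eq_single j (fun i _ hij => by rw [Pi.single_eq_of_ne hij]; rfl)
      (fun h => absurd (Finset.mem_univ j) h), Pi.single_eq_same]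

variable [∀ j, FiniteDimensional k (A j)]

lemma finrank_ker_sumMap_add_finrank_iSup :
    Module.finrank k (LinearMap.ker (sumMap A)) + Module.finrank k (⨆ j, A j : Submodule k V) =
      ∑ j, Module.finrank k (A j) := by
  rw [add_comm, ← range_sumMap, LinearMap.finrank_range_add_finrank_ker,
    Module.finrank_pi_fintype]

lemma exists_ne_zero_sum_eq_zero {B : Submodule k V} [FiniteDimensional k B]
    (hAB : ∀ j, A j ≤ B) (h : Module.finrank k B < ∑ j, Module.finrank k (A j)) :
    ∃ v : ι → V, v ≠ 0 ∧ (∀ j, v j ∈ A j) ∧ ∑ j, v j = 0 := by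
  have hle : Module.finrank k (⨆ j, A j : Submodule k V) ≤ Module.finrank k B :=
    Submodule.finrank_mono (iSup_le hAB)
  have hker : LinearMap.ker (sumMap A) ≠ ⊥ := fun hbot => by
    have := finrank_ker_sumMap_add_finrank_iSup (A := A)
    rw [hbot, finrank_bot] at this
    omega
  obtain ⟨x, hx, hx0⟩ := Submodule.exists_mem_ne_zero_of_ne_bot hker
  rw [LinearMap.mem_ker, sumMap_apply] at hx
  exact ⟨fun j => x j, fun h => hx0 (funext fun j => Subtype.ext (congrFun h j)),
    fun j => (x j).2, hx⟩

end SumMap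

section SumEqZero

lemma sum_fin_three_eq {M : Type*} [AddCommMonoid M] (f : Fin 3 → M) (i : Fin 3) :
    ∑ j, f j = f i + f (i + 1) + f (i + 2) := by
  rw [← Equiv.sum_comp (Equiv.addLeft i), Fin.sum_univ_three]
  simp

lemma mem_of_sum_eq_zero {R M ι : Type*} [Ring R] [AddCommGroup M] [Module R M] [Fintype ι]
    {A : Submodule R M} {f : ι → M} (hsum : ∑ j, f j = 0) {i : ι} (h : ∀ j ≠ i, f j ∈ A) :
    f i ∈ A := by
  classical
  rw [← Finset.add_sum_erase _ f (Finset.mem_univ i)] at hsum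
  rw [eq_neg_of_add_eq_zero_left hsum]
  exact neg_mem (sum_mem fun j hj => h j (Finset.ne_of_mem_erase hj))

end SumEqZero

section BasicSyzygy

open Polynomial

variable {k : Type*} [Field k] {n D : ℕ} {f : Fin 3 → k[X]}

/-- The terms `f 0 = P s ^ n`, `f 1 = Q t ^ n`, `f 2 = R u ^ n` of a syzygy of `s ^ n`, `t ^ n`,
`u ^ n`, as forms of degree `D`, which is as nondegenerate as possible: the terms are coprime and
have no further zeros at `s`, `t`, `u`. -/
structure BasicSyzygy (n D : ℕ) (f : Fin 3 → k[X]) : Prop where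
  sum_eq_zero : ∑ j, f j = 0
  hasOrders : ∀ j, HasOrders D (Pi.single j n) (f j)
  isCoprime : IsCoprime (f 0) (f 1)

lemma ne_zero_of_sum_eq_zero_of_mem_forms (hD : D < 2 * n) (hsum : ∑ j, f j = 0) (hf0 : f ≠ 0)
    (hf : ∀ j, f j ∈ forms k D (Pi.single j n)) (j : Fin 3) : f j ≠ 0 := by
  intro hj
  rw [sum_fin_three_eq f j, hj, zero_add] at hsum
  have hbot : forms k D (Pi.single (j + 1) n ⊔ Pi.single (j + 2) n) = ⊥ :=
    forms_eq_bot (hD.trans_eq (by fin_cases j <;> simp [Fin.sum_univ_three] <;> omega))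
  have hmem : f (j + 1) ∈ forms k D (Pi.single (j + 1) n ⊔ Pi.single (j + 2) n) :=
    mem_forms_sup (hf _) (eq_neg_of_add_eq_zero_left hsum ▸ neg_mem (hf _))
  rw [hbot, Submodule.mem_bot] at hmem
  rw [hmem, zero_add] at hsum
  refine hf0 (funext fun i => ?_)
  obtain rfl | rfl | rfl : i = j ∨ i = j + 1 ∨ i = j + 2 := by clear * -; decide +revert
  exacts [hj, hmem, hsum]

section

variable {p : ℕ} [CharP k p]

lemma not_forall_mem_forms_single (hnD : 3 * n = 2 * D + 1) (hDp : D < p) (hsum : ∑ j, f j = 0)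
    (hne : ∀ j, f j ≠ 0) (hf : ∀ j, f j ∈ forms k D (Pi.single j n)) (m : Fin 3) :
    ¬ ∀ j, f j ∈ forms k D (Pi.single m 1) := fun hm => by
  have hdeg j : (f j).natDegree ≤ D := mem_forms_zero_iff.1 (forms_le_forms_zero (hf j))
  simp only [mem_forms] at hm
  have hmason {T : ℕ} {z : k[X]} (hT : ∀ j, (f j).natDegree ≤ T) (hTD : T ≤ D) (h0 : z ∣ f 0)
      (h1 : z ∣ f 1) : 3 * n + z.natDegree ≤ D + T + 1 := by
    have := mason_forms (n := fun _ => n) hsum hne hf hT (hTD.trans_lt hDp) h0 h1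
    rwa [Fin.sum_const, smul_eq_mul] at this
  fin_cases m
  · have := hmason hdeg le_rfl (z := X) (by simpa using (hm 0).1) (by simpa using (hm 1).1)
    rw [natDegree_X] at this
    omega
  · have hT j : (f j).natDegree ≤ D - 1 := Nat.le_sub_of_add_le (by simpa using (hm j).2.2 (hne j))
    have : 1 ≤ D := le_of_add_le_right (by simpa using (hm 0).2.2 (hne 0))
    have := hmason hT (Nat.sub_le _ _) (one_dvd _) (one_dvd _)
    rw [natDegree_one] at this
    omega
  · have := hmason hdeg le_rfl (z := linU k) (by simpa using (hm 0).2.1)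
      (by simpa using (hm 1).2.1)
    rw [natDegree_linU] at this
    omega

lemma notMem_forms_add_single (hnD : 3 * n = 2 * D + 1) (hDp : D < p) (hsum : ∑ j, f j = 0)
    (hne : ∀ j, f j ≠ 0) (hf : ∀ j, f j ∈ forms k D (Pi.single j n)) (j m : Fin 3) :
    f j ∉ forms k D (Pi.single j n + Pi.single m 1) := fun hj => by
  rcases eq_or_ne m j with rfl | hmj
  · have hf' i : f i ∈ forms k D (Pi.single i (n + (Pi.single m 1 : Fin 3 → ℕ) i)) := by
      rcases eq_or_ne i m with rfl | him
      · simpa [← Pi.single_add] using hj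
      · simpa [him] using hf i
    have := mason_forms hsum hne hf' (fun i => mem_forms_zero_iff.1 (forms_le_forms_zero (hf i)))
      hDp (one_dvd _) (one_dvd _)
    rw [Finset.sum_add_distrib, Finset.sum_const, Finset.sum_pi_single', natDegree_one] at this
    simp only [Finset.card_univ, Fintype.card_fin, smul_eq_mul, Finset.mem_univ, if_true] at this
    omega
  · have hm : f m ∈ forms k D (Pi.single m 1) :=
      forms_antitone (Pi.single_le_single.2 (by omega)) (hf m)
    have hj' : f j ∈ forms k D (Pi.single m 1) := forms_antitone le_add_self hj
    refine not_forall_mem_forms_single hnD hDp hsum hne hf m fun i => ?_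
    have hmj_mem l (hl : l = m ∨ l = j) : f l ∈ forms k D (Pi.single m 1) := by
      rcases hl with rfl | rfl <;> assumption
    by_cases hi : i = m ∨ i = j
    · exact hmj_mem i hi
    · refine mem_of_sum_eq_zero hsum fun l hl => hmj_mem l ?_
      clear * - hmj hi hl
      decide +revert

lemma isCoprime_of_sum_eq_zero_of_mem_forms (hnD : 3 * n = 2 * D + 1) (hDp : D < p)
    (hsum : ∑ j, f j = 0) (hne : ∀ j, f j ≠ 0) (hf : ∀ j, f j ∈ forms k D (Pi.single j n)) :
    IsCoprime (f 0) (f 1) :=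
  isCoprime_of_irreducible_dvd (fun h => hne 0 h.1) fun z hz h0 h1 => by
    have := mason_forms (n := fun _ => n) hsum hne hf
      (fun i => mem_forms_zero_iff.1 (forms_le_forms_zero (hf i))) hDp h0 h1
    rw [Fin.sum_const, smul_eq_mul] at this
    have := hz.natDegree_pos
    omega

/-- The syzygy comes from a dimension count, and it is nondegenerate because Mason–Stothers is sharp
for `3 n = 2 D + 1`. -/
lemma exists_basicSyzygy (hnD : 3 * n = 2 * D + 1) (hDp : D < p) :
    ∃ f : Fin 3 → k[X], BasicSyzygy n D f := by
  obtain ⟨f, hf0, hf, hsum⟩ := exists_ne_zero_sum_eq_zero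
    (A := fun j => forms k D (Pi.single j n)) (B := forms k D 0) (fun _ => forms_le_forms_zero)
    (by simpa [finrank_forms, Fin.sum_univ_three] using by omega)
  have hne := ne_zero_of_sum_eq_zero_of_mem_forms (by omega) hsum hf0 hf
  exact ⟨f, hsum, fun j => .of_notMem (hf j) (notMem_forms_add_single hnD hDp hsum hne hf j),
    isCoprime_of_sum_eq_zero_of_mem_forms hnD hDp hsum hne hf⟩

end

lemma BasicSyzygy.pow_char {p : ℕ} [ExpChar k p] (hf : BasicSyzygy n D f) (j : ℕ) :
    BasicSyzygy (p ^ j * n) (p ^ j * D) (f ^ p ^ j) where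
  sum_eq_zero := by
    simp only [Pi.pow_apply, ← sum_pow_char_pow, hf.sum_eq_zero]
    exact zero_pow (pow_pos (expChar_pos k p) j).ne'
  hasOrders i := by
    simpa only [Pi.pow_apply, ← Pi.single_smul, smul_eq_mul] using (hf.hasOrders i).pow (p ^ j)
  isCoprime := hf.isCoprime.pow

end BasicSyzygy

section Generators

open Polynomial

/-- The exponents of the generators `s ^ i * u ^ q`, `t ^ i * s ^ q`, `u ^ i * t ^ q`. -/
def gen (i q : ℕ) (j : Fin 3) : Fin 3 → ℕ := Pi.single j i + Pi.single (j + 2) q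

variable {k : Type*} [Field k] {i q l : ℕ}

lemma sum_gen (i q : ℕ) (j : Fin 3) : ∑ m, gen i q j m = i + q := by
  simp [gen, Finset.sum_add_distrib]

lemma gen_sub_single (i q n : ℕ) (j : Fin 3) : gen i q j - Pi.single j n = gen (i - n) q j := by
  funext m
  rcases eq_or_ne m j with rfl | hm <;> simp [gen, *]

lemma single_le_gen (h : l ≤ i) (j : Fin 3) : Pi.single j l ≤ gen i q j :=
  (Pi.single_le_single.2 h).trans le_self_add

lemma single_le_gen_add_one (h : l ≤ q) (j : Fin 3) : Pi.single j l ≤ gen i q (j + 1) := by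
  rw [gen, add_assoc, show (1 : Fin 3) + 2 = 0 from rfl, add_zero]
  exact (Pi.single_le_single.2 h).trans le_add_self

lemma forall_mem_forms_gen_iff {g : k[X]} :
    (∀ j, g ∈ forms k l (gen i q j)) ↔ g ∈ forms k l fun _ => max i q := by
  refine ⟨fun h => mem_forms_of_forall_single fun j => ?_, fun h j => forms_antitone ?_ h⟩
  · rcases max_choice i q with hmax | hmax <;> rw [hmax]
    · exact forms_antitone (single_le_gen le_rfl j) (h j)
    · exact forms_antitone (single_le_gen_add_one le_rfl j) (h (j + 1))
  · intro m
    fin_cases j <;> fin_cases m <;> simp [gen]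

end Generators

namespace BasicSyzygy

open Polynomial

variable {k : Type*} [Field k] {n D i q l L : ℕ} {f U : Fin 3 → k[X]}

/-- The cross product of the two relations is a single form, which vanishes to order at least
`min i (q + n)` at each of `s`, `t`, `u`. -/
lemma cross_eq_zero (hf : BasicSyzygy n D f) (hU : ∀ j, U j ∈ forms k l (gen i q j))
    (hsum : ∑ j, U j = 0) (hl : l + D < 3 * min i (q + n)) : U 0 * f 1 = U 1 * f 0 := by
  have hcross (j : Fin 3) : U j * f (j + 1) - U (j + 1) * f j = U 0 * f 1 - U 1 * f 0 := by
    have hfs := hf.sum_eq_zero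
    rw [Fin.sum_univ_three] at hsum hfs
    fin_cases j
    · rfl
    · change U 1 * f 2 - U 2 * f 1 = _
      linear_combination U 1 * hfs - f 1 * hsum
    · change U 2 * f 0 - U 0 * f 2 = _
      linear_combination f 0 * hsum - U 0 * hfs
  have hmem : U 0 * f 1 - U 1 * f 0 ∈ forms k (l + D) fun _ => min i (q + n) :=
    mem_forms_of_forall_single fun j => hcross j ▸ sub_mem
      (forms_antitone ((single_le_gen (min_le_left _ _) j).trans le_self_add)
        (mul_mem_forms (hU j) (hf.hasOrders (j + 1)).mem_forms))
      (forms_antitone (by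
        calc Pi.single j (min i (q + n)) ≤ (Pi.single j (q + n) : Fin 3 → ℕ) :=
              Pi.single_le_single.2 inf_le_right
          _ = Pi.single j q + Pi.single j n := Pi.single_add _ _ _
          _ ≤ gen i q (j + 1) + Pi.single j n := by
            gcongr
            exact single_le_gen_add_one le_rfl j)
        (mul_mem_forms (hU (j + 1)) (hf.hasOrders j).mem_forms))
  rw [forms_eq_bot (by simpa using by omega), Submodule.mem_bot] at hmem
  exact sub_eq_zero.1 hmem

lemma exists_eq_mul (hf : BasicSyzygy n D f) (hsum : ∑ j, U j = 0)
    (hcross : U 0 * f 1 = U 1 * f 0) : ∃ θ, ∀ j, U j = θ * f j := by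
  obtain ⟨θ, hθ⟩ := hf.isCoprime.dvd_of_dvd_mul_right (Dvd.intro_left _ hcross.symm)
  have h0 : U 0 = θ * f 0 := hθ.trans (mul_comm _ _)
  have h1 : U 1 = θ * f 1 :=
    mul_right_cancel₀ (hf.hasOrders 0).ne_zero (by rw [← hcross, h0]; ring)
  have hfs := hf.sum_eq_zero
  rw [Fin.sum_univ_three] at hsum hfs
  have h2 : U 2 = θ * f 2 := by linear_combination hsum - θ * hfs - h0 - h1
  exact ⟨θ, fun j => by fin_cases j <;> assumption⟩

/-- A relation of small degree is a multiple of the basic syzygy, whose multiplier has too many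
zeros. -/
lemma eq_zero_of_mem_forms_gen (hf : BasicSyzygy n D f) (hni : n ≤ i)
    (hU : ∀ j, U j ∈ forms k l (gen i q j)) (hsum : ∑ j, U j = 0)
    (hl : l < D + 3 * max (i - n) q) (hlD : l + D < 3 * min i (q + n)) : U = 0 := by
  obtain ⟨θ, hθ⟩ := hf.exists_eq_mul hsum (hf.cross_eq_zero hU hsum hlD)
  suffices θ = 0 from funext fun j => by rw [hθ, this, zero_mul]; rfl
  by_contra hθ0
  obtain ⟨l, rfl⟩ : ∃ l', l = l' + D := by
    refine Nat.exists_eq_add_of_le' ?_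
    have hdeg : (U 0).natDegree ≤ l := mem_forms_zero_iff.1 (forms_le_forms_zero (hU 0))
    have hD : (f 0).natDegree = D := by simpa using (hf.hasOrders 0).natDegree_add
    rw [hθ, natDegree_mul hθ0 (hf.hasOrders 0).ne_zero] at hdeg
    omega
  have hmem : θ ∈ forms k l fun _ => max (i - n) q := forall_mem_forms_gen_iff.1 fun j =>
    gen_sub_single i q n j ▸
      (hf.hasOrders j).mem_forms_of_mul_mem (single_le_gen hni j 1) (hθ j ▸ hU j)
  rw [forms_eq_bot (by simpa using by omega), Submodule.mem_bot] at hmem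
  exact hθ0 hmem

/-- The multiples of the basic syzygy account for the kernel of the sum map. -/
lemma le_finrank_ker_sumMap (hf : BasicSyzygy n D f) (hL : D ≤ L) :
    L - D + 1 - 3 * max (i - n) q ≤
      Module.finrank k (LinearMap.ker (sumMap fun j => forms k L (gen i q j))) := by
  let K := forms k (L - D) fun _ => max (i - n) q
  have hmem (θ : K) (j : Fin 3) : θ.1 * f j ∈ forms k L (gen i q j) := by
    have := mul_mem_forms (forall_mem_forms_gen_iff.2 θ.2 j) (hf.hasOrders j).mem_forms
    rw [Nat.sub_add_cancel hL] at this
    refine forms_antitone ?_ this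
    rw [← gen_sub_single]
    exact le_tsub_add
  let Θ : K →ₗ[k] ∀ j, forms k L (gen i q j) := LinearMap.pi fun j =>
    ((LinearMap.mulRight k (f j)).comp K.subtype).codRestrict _ fun θ => hmem θ j
  have hker (θ : K) : Θ θ ∈ LinearMap.ker (sumMap fun j => forms k L (gen i q j)) := by
    rw [LinearMap.mem_ker, sumMap_apply]
    change ∑ j, θ.1 * f j = 0
    rw [← Finset.mul_sum, hf.sum_eq_zero, mul_zero]
  have hinj : Function.Injective (Θ.codRestrict _ hker) := fun θ θ' h => by
    have h0 : θ.1 * f 0 = θ'.1 * f 0 := congrArg (fun x => ((x.1 0 : forms k L _) : k[X])) h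
    exact Subtype.ext (mul_right_cancel₀ (hf.hasOrders 0).ne_zero h0)
  have := LinearMap.finrank_le_finrank_of_injective hinj
  rw [finrank_forms] at this
  simpa [mul_comm] using this

lemma three_mul_min_le (hf : BasicSyzygy n D f)
    (hspan : forms k L 0 ≤ ⨆ j, forms k L (gen i q j)) : 3 * min i (q + n) ≤ D + L + 1 := by
  have hrank := finrank_ker_sumMap_add_finrank_iSup (A := fun j => forms k L (gen i q j))
  rw [← hspan.antisymm (iSup_le fun _ => forms_le_forms_zero)] at hrank
  simp only [finrank_forms, sum_gen, Pi.zero_apply, Finset.sum_const, Finset.card_univ,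
    Fintype.card_fin, smul_eq_mul, mul_zero, tsub_zero] at hrank
  rcases le_or_gt D L with hDL | hLD
  · have := hf.le_finrank_ker_sumMap (i := i) (q := q) hDL
    omega
  · omega

end BasicSyzygy

section Spanning

open Polynomial

variable {k : Type*} [Field k] {e l L : ℕ}

lemma X_pow_mem_iSup_forms_gen (he : Even e) (hL : 2 * e ≤ L) (hL' : e < L) (i : ℕ) (hi : i ≤ L) :
    (X : k[X]) ^ i ∈ ⨆ j, forms k L (gen e 1 j) := by
  have hmem {g : k[X]} (j : Fin 3) (hg : g ∈ forms k L (gen e 1 j)) :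
      g ∈ ⨆ j, forms k L (gen e 1 j) := le_iSup (fun j => forms k L (gen e 1 j)) j hg
  have hu : linU k ^ e ∈ ⨆ j, forms k L (gen e 1 j) := hmem 2 <| mem_forms.2
    ⟨by simp [gen], by simp [gen], fun _ => by
      rw [natDegree_pow, natDegree_linU]; simpa [gen] using hL'⟩
  induction i with
  | zero =>
    have h1 : 1 - linU k ^ e ∈ forms k L (gen e 1 1) := by
      have hdvd : (X : k[X]) ∣ 1 - linU k ^ e := by
        rw [X_dvd_iff, coeff_zero_eq_eval_zero]
        simp [linU, he.neg_one_pow]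
      refine mem_forms.2 ⟨by simpa [gen] using hdvd, by simp [gen], fun _ => ?_⟩
      have hdeg : (1 - linU k ^ e).natDegree ≤ e :=
        (natDegree_sub_le _ _).trans (by simp [natDegree_pow, natDegree_linU])
      simp only [gen, Pi.add_apply, Pi.single_eq_same]
      simpa using by omega
    simpa using add_mem (hmem 1 h1) hu
  | succ i ih =>
    by_cases hie : i + 1 + e ≤ L
    · refine hmem 1 (mem_forms.2 ⟨?_, ?_, fun _ => ?_⟩)
      · simp [gen, pow_succ]
      · simp [gen]
      · rw [natDegree_X_pow]; simpa [gen] using hie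
    · have hXu : X ^ i * linU k ∈ forms k L (gen e 1 0) :=
        mem_forms.2 ⟨by simpa [gen] using (pow_dvd_pow X (by omega)).mul_right _,
          by simp [gen], fun _ => by
            rw [natDegree_mul (pow_ne_zero _ X_ne_zero) prime_linU.ne_zero, natDegree_X_pow,
              natDegree_linU]
            simpa [gen] using hi⟩
      have : (X : k[X]) ^ (i + 1) = -X ^ i - X ^ i * linU k := by
        linear_combination X ^ i * X_add_one_add_linU (k := k)
      rw [this]
      exact sub_mem (neg_mem (ih (by omega))) (hmem 0 hXu)

lemma forms_zero_le_iSup_forms_gen (he : Even e) (hL : 2 * e ≤ L) (hL' : e < L) :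
    forms k L 0 ≤ ⨆ j, forms k L (gen e 1 j) := by
  classical
  rw [forms_zero, degreeLT_eq_span_X_pow, Submodule.span_le]
  simp only [Finset.coe_image, Finset.coe_range, Set.image_subset_iff]
  exact fun i hi => X_pow_mem_iSup_forms_gen he hL hL' i (Nat.le_of_lt_succ hi)

lemma forms_zero_le_of_forall_stu_mul_mem (he : Even e) {M : ℕ} (hM : e ≤ M + 1) {r : ℕ}
    {H : Submodule k k[X]}
    (hH : ∀ a : Fin 3 → ℕ, ∑ j, a j = r → ∀ g ∈ forms k M 0,
      stu k (∑ j, a j • gen e 1 j) * g ∈ H) :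
    forms k (M + (e + 1) * r) 0 ≤ H := by
  induction r generalizing H with
  | zero =>
    intro g hg
    simpa [stu_zero] using hH 0 (by simp) g (by simpa using hg)
  | succ r ih =>
    refine (forms_zero_le_iSup_forms_gen he (by nlinarith) (by nlinarith)).trans
      (iSup_le fun j g hg => ?_)
    have hsum : M + (e + 1) * (r + 1) = M + (e + 1) * r + ∑ m, gen e 1 j m := by
      rw [sum_gen]; ring
    rw [hsum] at hg
    obtain ⟨h, hh, rfl⟩ := exists_eq_stu_mul hg
    refine ih (H := H.comap (LinearMap.mulLeft k (stu k (gen e 1 j))))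
      (fun a ha g' hg' => ?_) hh
    have := hH (a + Pi.single j 1) (by simp [Finset.sum_add_distrib, ha]) g' hg'
    rw [Submodule.mem_comap, LinearMap.mulLeft_apply, ← mul_assoc, ← stu_add]
    convert this using 3
    simp [add_smul, Finset.sum_add_distrib, add_comm, Pi.single_apply, ite_smul]

end Spanning

section VarPowers

open MvPolynomial

variable {σ R : Type*} [CommSemiring R] {q : ℕ} {f : MvPolynomial σ R}

/-- The ideal generated by the `q`-th powers of the variables. -/
noncomputable def varPowers (σ R : Type*) [CommSemiring R] (q : ℕ) : Ideal (MvPolynomial σ R) :=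
  Ideal.span (Set.range fun i => X i ^ q)

lemma mem_varPowers : f ∈ varPowers σ R q ↔ ∀ v ∈ f.support, ∃ i, q ≤ v i := by
  have : (Set.range fun i : σ => (X i : MvPolynomial σ R) ^ q) =
      (monomial · 1) '' Set.range fun i : σ => Finsupp.single i q := by
    simp only [← Set.range_comp, Function.comp_def, X_pow_eq_monomial]
  simp [varPowers, this, mem_ideal_span_monomial_image]

lemma X_pow_dvd_iff {i : σ} : X i ^ q ∣ f ↔ ∀ v ∈ f.support, q ≤ v i := by
  have : ({X i ^ q} : Set (MvPolynomial σ R)) = (monomial · 1) '' {Finsupp.single i q} := by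
    simp [X_pow_eq_monomial]
  rw [← Ideal.mem_span_singleton, this, mem_ideal_span_monomial_image]
  simp

lemma monomial_mem_varPowers {v : σ →₀ ℕ} {i : σ} (h : q ≤ v i) (c : R) :
    monomial v c ∈ varPowers σ R q :=
  mem_varPowers.2 fun _ hw => ⟨i, Finset.mem_singleton.1 (support_monomial_subset hw) ▸ h⟩

lemma monomial_mem_varPowers_of_lt_degree [Fintype σ] {v : σ →₀ ℕ}
    (h : Fintype.card σ * (q - 1) < v.degree) (c : R) :
    monomial v c ∈ varPowers σ R q := by
  rw [Finsupp.degree_eq_sum] at h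
  obtain ⟨i, -, hi⟩ := Finset.exists_lt_of_sum_lt (f := fun _ => q - 1) (s := Finset.univ)
    (by simpa using h)
  exact monomial_mem_varPowers (i := i) (by omega) c

end VarPowers

section Weights

variable {e N : ℕ} {v w : Fin 3 →₀ ℕ}

/-- The three weights of a monomial in `x, y, z`. Those of `x ^ e * y`, `y ^ e * z`, `z ^ e * x`
agree modulo `N = e ^ 2 - e + 1`, see `weight_cyc`. -/
def weight (e : ℕ) (v : Fin 3 →₀ ℕ) (i : Fin 3) : ℕ := e * v i + v (i + 1)

lemma weight_add : weight e (v + w) = weight e v + weight e w := by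
  funext i
  simp only [weight, Finsupp.add_apply, Pi.add_apply]
  ring

lemma sum_weight : ∑ i, weight e v i = (e + 1) * v.degree := by
  simp only [weight, Fin.sum_univ_three, Finsupp.degree_eq_sum, Fin.reduceAdd]
  ring

/-- The exponents of `x ^ e * y`, `y ^ e * z` and `z ^ e * x`. -/
noncomputable def cyc (e : ℕ) (j : Fin 3) : Fin 3 →₀ ℕ :=
  Finsupp.single j e + Finsupp.single (j + 1) 1

lemma degree_cyc (j : Fin 3) : (cyc e j).degree = e + 1 := by
  rw [cyc, map_add, Finsupp.degree_single, Finsupp.degree_single]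

lemma weight_cyc (hN : N + e = e * e + 1) (j i : Fin 3) :
    weight e (cyc e j) i = e + N * (Pi.single j 1 : Fin 3 → ℕ) i := by
  fin_cases j <;> fin_cases i <;> simp [weight, cyc] <;> omega

/-- The exponents of `s`, `t` and `u` in the form corresponding to the monomial with exponent `v`:
the weights of `v` divided by `N` and rounded down. -/
def stuExp (e N : ℕ) (v : Fin 3 →₀ ℕ) (i : Fin 3) : ℕ := weight e v i / N

lemma pos_of_add_eq (hN : N + e = e * e + 1) : 0 < N := by
  by_contra h
  nlinarith

lemma stuExp_add_cyc (hN : N + e = e * e + 1) (j : Fin 3) :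
    stuExp e N (v + cyc e j) = (fun i => (weight e v i + e) / N) + Pi.single j 1 := by
  funext i
  rw [stuExp, weight_add, Pi.add_apply, weight_cyc hN, ← add_assoc,
    Nat.add_mul_div_left _ _ (pos_of_add_eq hN), Pi.add_apply]

lemma sum_stuExp_le : ∑ i, stuExp e N v i ≤ (e + 1) * v.degree / N := by
  rw [← sum_weight, Fin.sum_univ_three, Fin.sum_univ_three]
  exact (Nat.add_le_add_right (Nat.div_add_div_le_add_div ..) _).trans
    (Nat.div_add_div_le_add_div ..)

lemma gen_le_stuExp {q : ℕ} {i : Fin 3} (h : q ≤ v i) :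
    gen (e * q / N) (q / N) i ≤ stuExp e N v := by
  have hi : e * q / N ≤ stuExp e N v i :=
    Nat.div_le_div_right ((Nat.mul_le_mul_left e h).trans le_self_add)
  have hi2 : q / N ≤ stuExp e N v (i + 2) := Nat.div_le_div_right <| by
    rw [weight, add_assoc, show (2 : Fin 3) + 1 = 0 from rfl, add_zero]
    exact h.trans le_add_self
  intro m
  fin_cases i <;> fin_cases m <;> simp_all [gen]

end Weights

section ToForms

open Polynomial

variable {k : Type*} [Field k] {e N q r : ℕ}

/-- The linear map from polynomials in `x, y, z` to binary forms which sends a monomial of degree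
`r` with weights `a, b, c` to `s ^ ⌊a / N⌋ * t ^ ⌊b / N⌋ * u ^ ⌊c / N⌋`, and kills the monomials of
other degrees. -/
noncomputable def toForms (k : Type*) [Field k] (e N r : ℕ) : MvPolynomial (Fin 3) k →ₗ[k] k[X] :=
  (MvPolynomial.basisMonomials (Fin 3) k).constr k fun v =>
    if v.degree = r then stu k (stuExp e N v) else 0

lemma toForms_monomial (v : Fin 3 →₀ ℕ) (c : k) :
    toForms k e N r (MvPolynomial.monomial v c) =
      if v.degree = r then c • stu k (stuExp e N v) else 0 := by
  have h := (MvPolynomial.basisMonomials (Fin 3) k).constr_basis k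
    (fun v => if v.degree = r then stu k (stuExp e N v) else 0) v
  rw [MvPolynomial.coe_basisMonomials] at h
  rw [← mul_one c, ← smul_eq_mul, ← MvPolynomial.smul_monomial, map_smul, toForms, h, smul_ite,
    smul_zero, smul_eq_mul, mul_one]

lemma toForms_mem {f : MvPolynomial (Fin 3) k} {H : Submodule k k[X]}
    (h : ∀ v ∈ f.support, v.degree = r → stu k (stuExp e N v) ∈ H) : toForms k e N r f ∈ H := by
  rw [f.as_sum, map_sum]
  refine sum_mem fun v hv => ?_
  rw [toForms_monomial]
  split_ifs with hr
  · exact H.smul_mem _ (h v hv hr)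
  · exact H.zero_mem

lemma stu_stuExp_mem_forms {v : Fin 3 →₀ ℕ} {i : Fin 3} (hv : q ≤ v i) :
    stu k (stuExp e N v) ∈ forms k ((e + 1) * v.degree / N) (gen (e * q / N) (q / N) i) :=
  forms_antitone (gen_le_stuExp hv) (stu_mem_forms sum_stuExp_le)

lemma toForms_mem_forms {f : MvPolynomial (Fin 3) k} {i : Fin 3} (hf : ∀ v ∈ f.support, q ≤ v i) :
    toForms k e N r f ∈ forms k ((e + 1) * r / N) (gen (e * q / N) (q / N) i) :=
  toForms_mem fun v hv hr => hr ▸ stu_stuExp_mem_forms (hf v hv)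

lemma toForms_mem_iSup_forms {f : MvPolynomial (Fin 3) k} (hf : f ∈ varPowers (Fin 3) k q) :
    toForms k e N r f ∈ ⨆ i, forms k ((e + 1) * r / N) (gen (e * q / N) (q / N) i) :=
  toForms_mem fun v hv hr => by
    obtain ⟨i, hi⟩ := mem_varPowers.1 hf v hv
    exact Submodule.mem_iSup_of_mem i (hr ▸ stu_stuExp_mem_forms hi)

lemma sum_stu_single : ∑ j, stu k (Pi.single j 1) = 0 := by
  rw [← X_add_one_add_linU (k := k), Fin.sum_univ_three]
  simp [stu]

end ToForms

section TrivediPolynomial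

open MvPolynomial

variable {k : Type} [Field k] {e N q r : ℕ}

lemma trivediPolynomial_add_one : trivediPolynomial (e + 1) k = ∑ j, monomial (cyc e j) 1 := by
  have (j : Fin 3) : monomial (cyc e j) (1 : k) = X j ^ e * X (j + 1) := by
    rw [cyc, X_pow_eq_monomial, X, monomial_mul, one_mul]
  simp [trivediPolynomial, Fin.sum_univ_three, this]

/-- The three terms of `f * h`, for a monomial `f`, go to the products of one and the same form
by `s`, `t` and `u`. -/
lemma toForms_mul_trivediPolynomial (hN : N + e = e * e + 1) (f : MvPolynomial (Fin 3) k) :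
    toForms k e N r (f * trivediPolynomial (e + 1) k) = 0 := by
  induction f using MvPolynomial.induction_on' with
  | add f g hf hg => rw [add_mul, map_add, hf, hg, add_zero]
  | monomial v c =>
    simp only [trivediPolynomial_add_one, Finset.mul_sum, monomial_mul, mul_one, map_sum,
      toForms_monomial, map_add, degree_cyc, stuExp_add_cyc hN, stu_add]
    split_ifs
    · rw [← Finset.smul_sum, ← Finset.mul_sum, sum_stu_single, mul_zero, smul_zero]
    · exact Finset.sum_const_zero

lemma toForms_mem_iSup_forms_of_mem_sup (hN : N + e = e * e + 1) {f : MvPolynomial (Fin 3) k}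
    (hf : f ∈ varPowers (Fin 3) k q ⊔ Ideal.span {trivediPolynomial (e + 1) k}) :
    toForms k e N r f ∈ ⨆ i, forms k ((e + 1) * r / N) (gen (e * q / N) (q / N) i) := by
  obtain ⟨f₁, hf₁, f₂, hf₂, rfl⟩ := Submodule.mem_sup.1 hf
  obtain ⟨g, rfl⟩ := Ideal.mem_span_singleton'.1 hf₂
  rw [map_add, toForms_mul_trivediPolynomial hN, add_zero]
  exact toForms_mem_iSup_forms hf₁

/-- The monomials `x ^ (N * a) * y ^ (N * b) * z ^ (N * c)` go to the products of powers of
`s ^ e * u`, `t ^ e * s` and `u ^ e * t`, whose multiples span all forms. -/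
lemma BasicSyzygy.lower_bound {n D lam : ℕ} {f : Fin 3 → Polynomial k} (hf : BasicSyzygy n D f)
    (hN : N + e = e * e + 1) (he : Even e)
    (h : ∀ v : Fin 3 →₀ ℕ, v.degree = N * lam → monomial v (1 : k) ∈
      varPowers (Fin 3) k q ⊔ Ideal.span {trivediPolynomial (e + 1) k}) :
    3 * min (e * q / N) (q / N + n) ≤ D + (e + (e + 1) * lam) + 1 := by
  refine hf.three_mul_min_le (forms_zero_le_of_forall_stu_mul_mem he (Nat.le_succ e)
    fun a ha g hg => ?_)
  have hpos := pos_of_add_eq hN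
  let v : Fin 3 →₀ ℕ := Finsupp.equivFunOnFinite.symm fun i => N * a i
  have hv : v.degree = N * lam := by
    simp [v, Finsupp.degree_eq_sum, ← ha, Finset.mul_sum]
  have hvexp : stuExp e N v = ∑ j, a j • gen e 1 j := by
    funext i
    have : weight e v i = N * (e * a i + a (i + 1)) := by simp [weight, v]; ring
    rw [stuExp, this, Nat.mul_div_cancel_left _ hpos]
    fin_cases i <;> simp [gen, Fin.sum_univ_three, mul_comm, add_comm]
  have hmem := toForms_mem_iSup_forms_of_mem_sup (r := N * lam) hN (h v hv)
  rw [toForms_monomial, if_pos hv, one_smul, hvexp, mul_left_comm,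
    Nat.mul_div_cancel_left _ hpos] at hmem
  have hmul : (⨆ j, forms k ((e + 1) * lam) (gen (e * q / N) (q / N) j)) ≤
      (⨆ j, forms k (e + (e + 1) * lam) (gen (e * q / N) (q / N) j)).comap
        (LinearMap.mulRight k g) := iSup_le fun j p hp => by
    have := mul_mem_forms hp hg
    rw [add_zero, add_comm] at this
    exact Submodule.mem_iSup_of_mem j this
  exact hmul hmem

end TrivediPolynomial

section ClassWeight

variable {e N : ℕ} {v w : Fin 3 →₀ ℕ}

/-- The grading of `k[x, y, z]` by the degree and the three weights modulo `N`, for which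
`x ^ e * y + y ^ e * z + z ^ e * x` is homogeneous. -/
noncomputable def classWeight (e N : ℕ) (j : Fin 3) : ℕ × (Fin 3 → ZMod N) :=
  (1, fun i => weight e (Finsupp.single j 1) i)

lemma weight_classWeight :
    Finsupp.weight (classWeight e N) v = (v.degree, fun i => (weight e v i : ZMod N)) := by
  induction v using Finsupp.induction_linear with
  | zero => ext <;> simp [weight]
  | add v w hv hw => rw [map_add, hv, hw, weight_add]; ext <;> simp
  | single j c =>
    rw [Finsupp.weight_single]
    ext i
    · simp [classWeight]
    · simp [classWeight, weight, Finsupp.single_apply, mul_add, mul_comm]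

lemma degree_eq_of_weight_eq
    (h : Finsupp.weight (classWeight e N) v = Finsupp.weight (classWeight e N) w) :
    v.degree = w.degree := by
  rw [weight_classWeight, weight_classWeight] at h
  exact congrArg Prod.fst h

lemma weight_mod_eq_of_weight_eq
    (h : Finsupp.weight (classWeight e N) v = Finsupp.weight (classWeight e N) w) (i : Fin 3) :
    weight e v i % N = weight e w i % N := by
  rw [weight_classWeight, weight_classWeight] at h
  exact (ZMod.natCast_eq_natCast_iff' ..).1 (congrFun (congrArg Prod.snd h) i)

lemma sum_stuExp_eq_of_weight_eq (hN : N + e = e * e + 1)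
    (h : Finsupp.weight (classWeight e N) v = Finsupp.weight (classWeight e N) w) :
    ∑ i, stuExp e N v i = ∑ i, stuExp e N w i := by
  have hdiv (u : Fin 3 →₀ ℕ) :
      N * ∑ i, stuExp e N u i + ∑ i, weight e u i % N = (e + 1) * u.degree := by
    simp only [← sum_weight, Finset.mul_sum, ← Finset.sum_add_distrib, stuExp, Nat.div_add_mod]
  have hv := hdiv v
  rw [degree_eq_of_weight_eq h, ← hdiv w,
    Finset.sum_congr rfl fun i _ => weight_mod_eq_of_weight_eq h i] at hv
  exact Nat.eq_of_mul_eq_mul_left (pos_of_add_eq hN) (Nat.add_right_cancel hv)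

lemma mul_sum_stuExp_smul_cyc_apply (hN : N + e = e * e + 1) (i : Fin 3) :
    N * (∑ j, stuExp e N v j • cyc e j) i + (e * (weight e v i % N) + weight e v (i + 2) % N) =
      N * v i + e * v.degree := by
  have hcyc : (∑ j, stuExp e N v j • cyc e j) i =
      e * stuExp e N v i + stuExp e N v (i + 2) := by
    fin_cases i <;> simp [Fin.sum_univ_three, cyc] <;> ring
  have hwt : e * weight e v i + weight e v (i + 2) = N * v i + e * v.degree := by
    have hsum : v.degree = v i + v (i + 1) + v (i + 2) := by
      rw [Finsupp.degree_eq_sum, Fin.sum_univ_three]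
      fin_cases i <;> simp <;> ring
    rw [hsum, weight, weight, add_assoc i 2 1, show (2 : Fin 3) + 1 = 0 from rfl, add_zero]
    linear_combination v i * hN.symm
  rw [hcyc, ← hwt]
  have h₁ := Nat.div_add_mod (weight e v i) N
  have h₂ := Nat.div_add_mod (weight e v (i + 2)) N
  simp only [stuExp]
  linear_combination e * h₁ + h₂

/-- Within one class, `toForms` followed by the substitution of `x ^ e * y`, `y ^ e * z`,
`z ^ e * x` for `s`, `t`, `u` multiplies all monomials by the same Laurent monomial. -/
lemma sum_stuExp_smul_cyc_add (hN : N + e = e * e + 1)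
    (h : Finsupp.weight (classWeight e N) v = Finsupp.weight (classWeight e N) w) :
    ∑ j, stuExp e N v j • cyc e j + w = v + ∑ j, stuExp e N w j • cyc e j := by
  ext i
  refine Nat.eq_of_mul_eq_mul_left (pos_of_add_eq hN) ?_
  have hv := mul_sum_stuExp_smul_cyc_apply (v := v) hN i
  have hw := mul_sum_stuExp_smul_cyc_apply (v := w) hN i
  rw [degree_eq_of_weight_eq h, weight_mod_eq_of_weight_eq h,
    weight_mod_eq_of_weight_eq h] at hv
  rw [Finsupp.add_apply, Finsupp.add_apply]
  linarith

open Polynomial in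
lemma homogenize_stu {k : Type*} [Field k] (a : Fin 3 → ℕ) :
    (stu k a).homogenize (∑ i, a i) =
      MvPolynomial.X 0 ^ a 0 * MvPolynomial.X 1 ^ a 1 *
        (-(MvPolynomial.X 0 + MvPolynomial.X 1)) ^ a 2 := by
  have hu (n : ℕ) : (linU k ^ n).homogenize n =
      (-(MvPolynomial.X 0 + MvPolynomial.X 1)) ^ n := by
    induction n with
    | zero => simp
    | succ n ih =>
      have hn : (linU k ^ n).natDegree ≤ n :=
        (natDegree_pow_le_of_le n natDegree_linU.le).trans (mul_one n).le
      rw [pow_succ, pow_succ, homogenize_mul _ _ hn natDegree_linU.le, ih, linU, homogenize_neg,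
        homogenize_add, homogenize_one, homogenize_X one_ne_zero]
      simp [add_comm]
  have hX : (X ^ a 0 : k[X]).homogenize (a 0 + a 1) =
      MvPolynomial.X 0 ^ a 0 * MvPolynomial.X 1 ^ a 1 := by
    rw [homogenize_X_pow le_self_add, Nat.add_sub_cancel_left]
  rw [Fin.sum_univ_three, stu, homogenize_mul _ _ (by simp) (by simp [natDegree_linU]), hX, hu]

end ClassWeight

section Kernel

open MvPolynomial

variable {k : Type} [Field k] {e N r : ℕ} {f : MvPolynomial (Fin 3) k}

lemma isWeightedHomogeneous_trivediPolynomial (hN : N + e = e * e + 1) :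
    IsWeightedHomogeneous (classWeight e N) (trivediPolynomial (e + 1) k) (e + 1, fun _ => e) := by
  rw [trivediPolynomial_add_one]
  refine IsWeightedHomogeneous.sum _ _ _ fun j _ => isWeightedHomogeneous_monomial _ _ _ ?_
  simp [weight_classWeight, degree_cyc, weight_cyc hN]

lemma X_not_dvd_trivediPolynomial (he : 0 < e) (i : Fin 3) :
    ¬ X i ∣ trivediPolynomial (e + 1) k := by
  intro h
  have := map_dvd (eval fun j => if j = i then (0 : k) else 1) h
  fin_cases i <;> simp [trivediPolynomial, he.ne'] at this

lemma isRelPrime_X_pow_trivediPolynomial (he : 0 < e) (i : Fin 3) (n : ℕ) :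
    IsRelPrime (X i ^ n) (trivediPolynomial (e + 1) k) :=
  ((X_prime (R := k) (i := i)).irreducible.isRelPrime_iff_not_dvd.2
    (X_not_dvd_trivediPolynomial he i)).pow_left

lemma isRelPrime_monomial_trivediPolynomial (he : 0 < e) (v : Fin 3 →₀ ℕ) :
    IsRelPrime (monomial v 1) (trivediPolynomial (e + 1) k) := by
  rw [monomial_eq, map_one, one_mul, Finsupp.prod]
  exact IsRelPrime.prod_left fun i _ => isRelPrime_X_pow_trivediPolynomial he i _

/-- Substituting `x ^ e * y`, `y ^ e * z`, `z ^ e * x` for `s`, `t`, `u = -(s + t)` is well defined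
modulo the sum of the three. -/
lemma mk_aeval_homogenize_stu (a : Fin 3 → ℕ) :
    Ideal.Quotient.mk (Ideal.span {trivediPolynomial (e + 1) k})
        (aeval ![monomial (cyc e 0) 1, monomial (cyc e 1) 1]
          ((stu k a).homogenize (∑ i, a i))) =
      Ideal.Quotient.mk _ (monomial (∑ j, a j • cyc e j) 1) := by
  have hsum : monomial (cyc e 2) (1 : k) - -(monomial (cyc e 0) 1 + monomial (cyc e 1) 1) =
      trivediPolynomial (e + 1) k := by
    rw [trivediPolynomial_add_one, Fin.sum_univ_three]; ring
  have hu : Ideal.Quotient.mk (Ideal.span {trivediPolynomial (e + 1) k}) (monomial (cyc e 2) 1) =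
      Ideal.Quotient.mk _ (-(monomial (cyc e 0) 1 + monomial (cyc e 1) 1)) :=
    Ideal.Quotient.eq.2 (hsum ▸ Ideal.mem_span_singleton_self _)
  have hmon : monomial (∑ j, a j • cyc e j) (1 : k) = ∏ j, monomial (cyc e j) 1 ^ a j := by
    simp only [Fin.sum_univ_three, Fin.prod_univ_three, monomial_pow, one_pow, monomial_mul,
      mul_one]
  rw [homogenize_stu, hmon, Fin.prod_univ_three, map_mul (Ideal.Quotient.mk _) _ (_ ^ a 2),
    map_pow _ (monomial (cyc e 2) 1), hu]
  simp

lemma trivediPolynomial_dvd_sum_of_toForms_eq_zero {l : ℕ} (hdeg : ∀ v ∈ f.support, v.degree = r)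
    (hl : ∀ v ∈ f.support, ∑ i, stuExp e N v i = l) (h : toForms k e N r f = 0) :
    trivediPolynomial (e + 1) k ∣
      ∑ v ∈ f.support, f.coeff v • monomial (∑ j, stuExp e N v j • cyc e j) 1 := by
  rw [f.as_sum, map_sum, Finset.sum_congr rfl fun v hv => by
    rw [toForms_monomial, if_pos (hdeg v hv)]] at h
  have h := congrArg (fun g => Ideal.Quotient.mkₐ k (Ideal.span {trivediPolynomial (e + 1) k})
    (aeval ![monomial (cyc e 0) 1, monomial (cyc e 1) 1] (g.homogenize l))) h
  rw [Polynomial.homogenize_zero, map_zero, map_zero, Polynomial.homogenize_finsetSum, map_sum,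
    map_sum] at h
  rw [← Ideal.mem_span_singleton, ← Ideal.Quotient.eq_zero_iff_mem,
    ← Ideal.Quotient.mkₐ_eq_mk k, ← h, map_sum]
  refine Finset.sum_congr rfl fun v hv => ?_
  rw [Polynomial.homogenize_smul, map_smul, map_smul, map_smul, ← hl v hv,
    Ideal.Quotient.mkₐ_eq_mk, mk_aeval_homogenize_stu]

lemma trivediPolynomial_dvd_of_toForms_eq_zero (hN : N + e = e * e + 1) (he : 0 < e)
    {c : Fin 3 → ZMod N} (hf : IsWeightedHomogeneous (classWeight e N) f (r, c))
    (h : toForms k e N r f = 0) : trivediPolynomial (e + 1) k ∣ f := by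
  rcases eq_or_ne f 0 with rfl | hf0
  · exact dvd_zero _
  obtain ⟨w, hw⟩ := support_nonempty.2 hf0
  have hclass {v} (hv : v ∈ f.support) :
      Finsupp.weight (classWeight e N) v = Finsupp.weight (classWeight e N) w :=
    (hf (mem_support_iff.1 hv)).trans (hf (mem_support_iff.1 hw)).symm
  have hdeg v (hv : v ∈ f.support) : v.degree = r := by
    have := hf (mem_support_iff.1 hv)
    rw [weight_classWeight] at this
    exact congrArg Prod.fst this
  have hsubst := trivediPolynomial_dvd_sum_of_toForms_eq_zero hdeg
    (fun v hv => sum_stuExp_eq_of_weight_eq hN (hclass hv)) h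
  have hmul : (∑ v ∈ f.support, f.coeff v • monomial (∑ j, stuExp e N v j • cyc e j) 1) *
      monomial w 1 = f * monomial (∑ j, stuExp e N w j • cyc e j) 1 := by
    conv_rhs => rw [f.as_sum]
    rw [Finset.sum_mul, Finset.sum_mul]
    refine Finset.sum_congr rfl fun v hv => ?_
    rw [smul_mul_assoc, monomial_mul, monomial_mul, sum_stuExp_smul_cyc_add hN (hclass hv),
      smul_monomial, mul_one, mul_one, smul_eq_mul, mul_one]
  exact (isRelPrime_monomial_trivediPolynomial he _).symm.dvd_of_dvd_mul_right
    (hmul ▸ hsubst.mul_right _)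

end Kernel

section Duality

open MvPolynomial

variable {σ k : Type*} [Fintype σ] [Field k] {q : ℕ}

/-- The exponent of the socle monomial of the quotient by `varPowers σ k q`. -/
noncomputable def topExp (σ : Type*) [Fintype σ] (q : ℕ) : σ →₀ ℕ :=
  Finsupp.equivFunOnFinite.symm fun _ => q - 1

lemma le_topExp_iff (hq : 0 < q) {v : σ →₀ ℕ} : v ≤ topExp σ q ↔ ∀ i, v i < q :=
  forall_congr' fun _ => Nat.le_sub_one_iff_lt hq

lemma degree_topExp : (topExp σ q).degree = Fintype.card σ * (q - 1) := by
  simp [topExp, Finsupp.degree_eq_sum]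

open scoped Classical in
/-- The Macaulay inverse system of a linear functional, shifted by the socle monomial so that it
is again a polynomial. -/
noncomputable def dualPolynomial (q : ℕ) (φ : MvPolynomial σ k →ₗ[k] k) : MvPolynomial σ k :=
  ∑ v ∈ Finset.Icc 0 (topExp σ q), monomial v (φ (monomial (topExp σ q - v) 1))

lemma coeff_dualPolynomial {φ : MvPolynomial σ k →ₗ[k] k} {v : σ →₀ ℕ} (hv : v ≤ topExp σ q) :
    (dualPolynomial q φ).coeff v = φ (monomial (topExp σ q - v) 1) := by
  classical
  simp [dualPolynomial, coeff_sum, coeff_monomial, hv]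

lemma coeff_mul_dualPolynomial (hq : 0 < q) {φ : MvPolynomial σ k →ₗ[k] k}
    (hφ : ∀ f ∈ varPowers σ k q, φ f = 0) (f : MvPolynomial σ k) {v : σ →₀ ℕ}
    (hv : v ≤ topExp σ q) :
    (f * dualPolynomial q φ).coeff v = φ (f * monomial (topExp σ q - v) 1) := by
  induction f using MvPolynomial.induction_on' with
  | add f g hf hg => rw [add_mul, coeff_add, hf, hg, add_mul, map_add]
  | monomial w c =>
    rw [coeff_monomial_mul', monomial_mul, mul_one]
    split_ifs with hwv
    · rw [coeff_dualPolynomial (tsub_le_self.trans hv), tsub_tsub_assoc hv hwv, add_comm w,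
        ← smul_eq_mul, ← map_smul, smul_monomial, smul_eq_mul, mul_one]
    · obtain ⟨i, hi⟩ := not_forall.1 hwv
      refine (hφ _ (monomial_mem_varPowers (i := i) ?_ c)).symm
      have hvi := (le_topExp_iff hq).1 hv i
      simp only [Finsupp.add_apply, Finsupp.tsub_apply, topExp,
        Finsupp.equivFunOnFinite_symm_apply_apply]
      omega

/-- The quotient by `varPowers σ k q` is Gorenstein: a monomial outside the ideal generated by `h`
is detected by the annihilator of `h`. -/
lemma exists_mul_mem_varPowers (hq : 0 < q) {h : MvPolynomial σ k} {v : σ →₀ ℕ}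
    (hv : monomial v 1 ∉ varPowers σ k q ⊔ Ideal.span {h}) :
    ∃ u, h * u ∈ varPowers σ k q ∧ u.coeff (topExp σ q - v) ≠ 0 := by
  obtain ⟨φ, hφv, hφ⟩ := Submodule.exists_le_ker_of_notMem
    (p := (varPowers σ k q ⊔ Ideal.span {h}).restrictScalars k) hv
  have hφq : ∀ f ∈ varPowers σ k q, φ f = 0 := fun f hf => hφ (Ideal.mem_sup_left hf)
  refine ⟨dualPolynomial q φ, mem_varPowers.2 fun w hw => ?_, ?_⟩
  · by_contra! hlt
    refine mem_support_iff.1 hw ?_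
    rw [coeff_mul_dualPolynomial hq hφq h ((le_topExp_iff hq).2 hlt)]
    exact hφ (Ideal.mem_sup_right (Ideal.mul_mem_right _ _ (Ideal.mem_span_singleton_self h)))
  · have hvtop : v ≤ topExp σ q := (le_topExp_iff hq).2 fun i => by
      by_contra! hi
      exact hφv (hφq _ (monomial_mem_varPowers hi 1))
    rwa [coeff_dualPolynomial tsub_le_self, tsub_tsub_cancel_of_le hvtop]

end Duality

section Components

open MvPolynomial

variable {σ R : Type*} [CommSemiring R] {q : ℕ}

lemma weightedHomogeneousComponent_mem_varPowers {M : Type*} [AddCommMonoid M] (w : σ → M) (m : M)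
    {f : MvPolynomial σ R} (hf : f ∈ varPowers σ R q) :
    weightedHomogeneousComponent w m f ∈ varPowers σ R q := by
  classical
  rw [mem_varPowers] at hf ⊢
  rw [support_weightedHomogeneousComponent]
  exact fun v hv => hf v (Finset.mem_filter.1 hv).1

lemma weightedHomogeneousComponent_add_mul {M : Type*} [AddCommMonoid M] [IsLeftCancelAdd M]
    {w : σ → M} {h : MvPolynomial σ R} {m : M} (hh : IsWeightedHomogeneous w h m) (n : M)
    (u : MvPolynomial σ R) :
    weightedHomogeneousComponent w (m + n) (h * u) = h * weightedHomogeneousComponent w n u := by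
  classical
  induction u using MvPolynomial.induction_on' with
  | add f g hf hg => rw [mul_add, map_add, hf, hg, map_add, mul_add]
  | monomial v c =>
    have hv := isWeightedHomogeneous_monomial w v c rfl
    rw [weightedHomogeneousComponent_of_mem (hh.mul hv), weightedHomogeneousComponent_of_mem hv,
      mul_ite, mul_zero]
    simp only [add_right_inj]

lemma exists_eq_sum_of_mem_varPowers [Fintype σ] {f : MvPolynomial σ R} (hf : f ∈ varPowers σ R q) :
    ∃ g : σ → MvPolynomial σ R, f = ∑ i, g i ∧
      ∀ i, ∀ v ∈ (g i).support, v ∈ f.support ∧ q ≤ v i := by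
  classical
  choose idx hidx using mem_varPowers.1 hf
  refine ⟨fun i => ∑ v ∈ f.support.attach with idx v.1 v.2 = i, monomial v.1 (f.coeff v.1), ?_,
    fun i v hv => ?_⟩
  · rw [Finset.sum_fiberwise f.support.attach fun v => idx v.1 v.2]
    exact f.as_sum.trans (Finset.sum_attach f.support fun v => monomial v (f.coeff v)).symm
  · obtain ⟨w, hw, hvw⟩ := Finset.mem_biUnion.1 (support_sum hv)
    obtain rfl := Finset.mem_singleton.1 (support_monomial_subset hvw)
    exact ⟨w.2, (Finset.mem_filter.1 hw).2 ▸ hidx w w.2⟩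

end Components

section UpperBound

open MvPolynomial

variable {k : Type} [Field k] {e N q r n D : ℕ} {f : Fin 3 → Polynomial k}

/-- The parts of `h * u` divisible by the different `q`-th powers of the variables are multiples of
`h`, as `toForms` makes them a relation of small degree. -/
lemma BasicSyzygy.mem_varPowers_of_mul_mem (hf : BasicSyzygy n D f) (hN : N + e = e * e + 1)
    (he : 0 < e) (hn : n ≤ e * q / N) {u : MvPolynomial (Fin 3) k} {c : Fin 3 → ZMod N}
    (hu : IsWeightedHomogeneous (classWeight e N) u (r, c))
    (hlt : (e + 1) * (e + 1 + r) / N < D + 3 * max (e * q / N - n) (q / N))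
    (hlt' : (e + 1) * (e + 1 + r) / N + D < 3 * min (e * q / N) (q / N + n))
    (h : trivediPolynomial (e + 1) k * u ∈ varPowers (Fin 3) k q) : u ∈ varPowers (Fin 3) k q := by
  obtain ⟨g, hsum, hg⟩ := exists_eq_sum_of_mem_varPowers h
  have hhom := (isWeightedHomogeneous_trivediPolynomial (k := k) hN).mul hu
  have hzero : (fun i => toForms k e N (e + 1 + r) (g i)) = 0 :=
    hf.eq_zero_of_mem_forms_gen hn (fun i => toForms_mem_forms fun v hv => (hg i v hv).2)
      (by rw [← map_sum, ← hsum, mul_comm, toForms_mul_trivediPolynomial hN]) hlt hlt'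
  have hdvd (i : Fin 3) : trivediPolynomial (e + 1) k ∣ g i :=
    trivediPolynomial_dvd_of_toForms_eq_zero hN he
      (fun {v} hv => hhom (mem_support_iff.1 (hg i v (mem_support_iff.2 hv)).1))
      (congrFun hzero i)
  choose g' hg' using hdvd
  have heq : u = ∑ i, g' i := by
    have h0 : trivediPolynomial (e + 1) k ≠ 0 := fun h0 =>
      X_not_dvd_trivediPolynomial (k := k) he 0 (h0 ▸ dvd_zero _)
    refine mul_left_cancel₀ h0 ?_
    rw [hsum, Finset.mul_sum]
    exact Finset.sum_congr rfl fun i _ => hg' i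
  rw [heq]
  refine sum_mem fun i _ => ?_
  have hX : X i ^ q ∣ g' i := (isRelPrime_X_pow_trivediPolynomial he i q).dvd_of_dvd_mul_left
    (hg' i ▸ X_pow_dvd_iff.2 fun v hv => (hg i v hv).2)
  exact Ideal.mem_of_dvd _ hX (Ideal.subset_span ⟨i, rfl⟩)

lemma BasicSyzygy.upper_bound (hf : BasicSyzygy n D f) (hN : N + e = e * e + 1) (he : 0 < e)
    (hq : 0 < q) (hn : n ≤ e * q / N) {v : Fin 3 →₀ ℕ}
    (hlt : (e + 1) * (e + 1 + (3 * (q - 1) - v.degree)) / N <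
      D + 3 * max (e * q / N - n) (q / N))
    (hlt' : (e + 1) * (e + 1 + (3 * (q - 1) - v.degree)) / N + D <
      3 * min (e * q / N) (q / N + n)) :
    monomial v (1 : k) ∈ varPowers (Fin 3) k q ⊔ Ideal.span {trivediPolynomial (e + 1) k} := by
  by_contra hv
  obtain ⟨u, hu, hcoeff⟩ := exists_mul_mem_varPowers hq hv
  set w := topExp (Fin 3) q - v with hw
  have hvtop : v ≤ topExp (Fin 3) q := (le_topExp_iff hq).2 fun i => by
    by_contra! hi
    exact hv (Ideal.mem_sup_left (monomial_mem_varPowers hi 1))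
  have hdeg : w.degree = 3 * (q - 1) - v.degree := by
    have hadd : (w + v).degree = 3 * (q - 1) := by
      rw [hw, tsub_add_cancel_of_le hvtop, degree_topExp, Fintype.card_fin]
    rw [← hadd, map_add, Nat.add_sub_cancel]
  obtain ⟨c, hm⟩ : ∃ c, Finsupp.weight (classWeight e N) w = (3 * (q - 1) - v.degree, c) :=
    ⟨_, weight_classWeight.trans (by rw [hdeg])⟩
  have hmem := weightedHomogeneousComponent_mem_varPowers (classWeight e N)
    ((e + 1, fun _ => (e : ZMod N)) + (3 * (q - 1) - v.degree, c)) hu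
  rw [weightedHomogeneousComponent_add_mul (isWeightedHomogeneous_trivediPolynomial hN)] at hmem
  have hsupp : w ∈ (weightedHomogeneousComponent (classWeight e N)
      (3 * (q - 1) - v.degree, c) u).support := by
    classical
    rwa [mem_support_iff, coeff_weightedHomogeneousComponent, if_pos hm]
  obtain ⟨i, hi⟩ := mem_varPowers.1 (hf.mem_varPowers_of_mul_mem hN he hn
    (weightedHomogeneousComponent_isWeightedHomogeneous _ u) hlt hlt' hmem) w hsupp
  exact hi.not_gt ((le_topExp_iff hq).1 tsub_le_self i)

end UpperBound

section Arithmetic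

/-- The identity `N * n = (e - 1) * (q - 2 * w)` or `N * n = (e - 1) * (q + 2 * w)` relating the
exponent `n` of a syzygy to the Frobenius exponent `q`, stated without subtraction. -/
def IsSyzygyExponent (e N q w n : ℕ) : Prop :=
  N * n + q + 2 * e * w = e * q + 2 * w ∨ N * n + q + 2 * w = e * q + 2 * e * w

-- For `d = e + 1`, the number `G` with `G + 7 * e = e * e + 7` is `d ^ 2 - 9 * d + 15`.
variable {e N G q w n D : ℕ}

lemma le_mul_add_max (hN : N + e = e * e + 1) (hG : G + 7 * e = e * e + 7)
    (hnD : 3 * n = 2 * D + w)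
    (hn : IsSyzygyExponent e N q w n) :
    3 * (e + 1) * q ≤ 2 * N * (D + 3 * max (e * q / N - n) (q / N)) + G * w + 6 * N := by
  have hpos := pos_of_add_eq hN
  have hNw := congrArg (· * w) hN
  have hGw := congrArg (· * w) hG
  have hND := congrArg (N * ·) hnD
  have hi := Nat.lt_mul_div_succ (e * q) hpos
  have hq := Nat.lt_mul_div_succ q hpos
  rcases hn with h | h
  · have hmax : N * (e * q / N) ≤ N * (max (e * q / N - n) (q / N) + n) :=
      Nat.mul_le_mul_left _ (by omega)
    nlinarith
  · have hmax : N * (q / N) ≤ N * max (e * q / N - n) (q / N) :=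
      Nat.mul_le_mul_left _ (le_max_right ..)
    nlinarith

lemma add_mul_le_mul_min (hN : N + e = e * e + 1) (hG : G + 7 * e = e * e + 7) (he : 0 < e)
    (hnD : 3 * n = 2 * D + w)
    (hn : IsSyzygyExponent e N q w n) :
    3 * (e + 1) * q + G * w + 2 * N * D ≤ 2 * N * (3 * min (e * q / N) (q / N + n)) + 6 * N := by
  have hpos := pos_of_add_eq hN
  have hNw := congrArg (· * w) hN
  have hGw := congrArg (· * w) hG
  have hND := congrArg (N * ·) hnD
  have hi := Nat.lt_mul_div_succ (e * q) hpos
  have hq := Nat.lt_mul_div_succ q hpos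
  have hew : w ≤ e * w := Nat.le_mul_of_pos_left w he
  rcases min_choice (e * q / N) (q / N + n) with hmin | hmin <;> rw [hmin] <;>
    rcases hn with h | h <;> nlinarith

end Arithmetic

section ExplicitBounds

open MvPolynomial

variable {k : Type} [Field k] {e N G q w n D : ℕ} {f : Fin 3 → Polynomial k}

lemma BasicSyzygy.monomial_mem_of_le (hf : BasicSyzygy n D f) (hN : N + e = e * e + 1)
    (hG : G + 7 * e = e * e + 7) (he : 0 < e) (hq : 0 < q) (hw : 2 * e * w ≤ q + 2 * w)
    (hnD : 3 * n = 2 * D + w)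
    (hn : IsSyzygyExponent e N q w n)
    {v : Fin 3 →₀ ℕ}
    (hv : 3 * (e + 1) * q + G * w + (2 * (e + 1) ^ 2 + 6 * N) ≤ 2 * (e + 1) * v.degree) :
    monomial v (1 : k) ∈ varPowers (Fin 3) k q ⊔ Ideal.span {trivediPolynomial (e + 1) k} := by
  rcases lt_or_ge (3 * (q - 1)) v.degree with hdeg | hdeg
  · exact Ideal.mem_sup_left (monomial_mem_varPowers_of_lt_degree (by simpa using hdeg) 1)
  have hpos := pos_of_add_eq hN
  have hmax := le_mul_add_max hN hG hnD hn
  have hmin := add_mul_le_mul_min hN hG he hnD hn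
  have hnle : n ≤ e * q / N := by
    rw [Nat.le_div_iff_mul_le hpos]
    have hew : w ≤ e * w := Nat.le_mul_of_pos_left w he
    rcases hn with h | h <;> nlinarith
  have hl : 2 * N * ((e + 1) * (e + 1 + (3 * (q - 1) - v.degree)) / N) + G * w + 6 * N <
      3 * (e + 1) * q := by
    have hdiv := Nat.mul_div_le ((e + 1) * (e + 1 + (3 * (q - 1) - v.degree))) N
    obtain ⟨b, hb⟩ := Nat.exists_eq_add_of_le hdeg
    rw [hb, Nat.add_sub_cancel_left] at hdiv ⊢
    obtain ⟨q, rfl⟩ := Nat.exists_eq_add_of_lt hq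
    simp only [zero_add, Nat.add_sub_cancel] at hb hv ⊢
    nlinarith
  refine hf.upper_bound hN he hq hnle ?_ ?_ <;> by_contra! h <;>
    linarith [Nat.mul_le_mul_left (2 * N) h, Nat.zero_le (G * w)]

lemma BasicSyzygy.exists_monomial_notMem (hf : BasicSyzygy n D f) (hN : N + e = e * e + 1)
    (hG : G + 7 * e = e * e + 7) (he : 0 < e) (heven : Even e) (hnD : 3 * n = 2 * D + w)
    (hn : IsSyzygyExponent e N q w n) {l : ℕ}
    (hl : 2 * N * (e + (e + 1) * l + 1) + 6 * N < 3 * (e + 1) * q + G * w) :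
    ∃ v : Fin 3 →₀ ℕ, v.degree = N * l ∧ monomial v (1 : k) ∉
      varPowers (Fin 3) k q ⊔ Ideal.span {trivediPolynomial (e + 1) k} := by
  by_contra! h
  have hlow := Nat.mul_le_mul_left (2 * N) (hf.lower_bound hN heven h)
  have hmin := add_mul_le_mul_min hN hG he hnD hn
  linarith

end ExplicitBounds

section FrobeniusPower

open MvPolynomial

lemma frobeniusPower_map {R S : Type*} [CommRing R] [CommRing S] {φ : R →+* S}
    (hφ : Function.Surjective φ) (J : Ideal R) (q : ℕ) :
    frobeniusPower (J.map φ) q = (frobeniusPower J q).map φ := by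
  have : (J.map φ : Set S) = φ '' J :=
    Set.ext fun _ => Ideal.mem_map_iff_of_surjective φ hφ
  simp only [frobeniusPower, Ideal.map_span, this, Set.image_image, map_pow]

lemma frobeniusPower_idealOfVars (σ R : Type*) [CommRing R] (p : ℕ) [ExpChar R p] (j : ℕ) :
    frobeniusPower (idealOfVars σ R) (p ^ j) = varPowers σ R (p ^ j) := by
  have : frobeniusPower (idealOfVars σ R) (p ^ j) =
      (idealOfVars σ R).map (iterateFrobenius (MvPolynomial σ R) p j) := rfl
  rw [this, idealOfVars, Ideal.map_span, ← Set.range_comp]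
  rfl

lemma map_idealOfVars (d : ℕ) (k : Type) [Field k] :
    (idealOfVars (Fin 3) k).map (Ideal.Quotient.mk (Ideal.span {trivediPolynomial d k})) =
      trivediMaxIdeal d k := by
  rw [idealOfVars, Ideal.map_span, ← Set.range_comp]
  rfl

lemma trivediMaxIdeal_pow_le_frobeniusPower_iff {d p j r : ℕ} {k : Type} [Field k] [ExpChar k p] :
    trivediMaxIdeal d k ^ r ≤ frobeniusPower (trivediMaxIdeal d k) (p ^ j) ↔
      ∀ v : Fin 3 →₀ ℕ, v.degree = r → monomial v (1 : k) ∈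
        varPowers (Fin 3) k (p ^ j) ⊔ Ideal.span {trivediPolynomial d k} := by
  have hpow : trivediMaxIdeal d k ^ r = (idealOfVars (Fin 3) k ^ r).map
      (Ideal.Quotient.mk (Ideal.span {trivediPolynomial d k})) := by
    rw [Ideal.map_pow, map_idealOfVars]
    rfl
  have hfrob : frobeniusPower (trivediMaxIdeal d k) (p ^ j) = (varPowers (Fin 3) k (p ^ j)).map
      (Ideal.Quotient.mk (Ideal.span {trivediPolynomial d k})) := by
    rw [← frobeniusPower_idealOfVars, ← frobeniusPower_map Ideal.Quotient.mk_surjective,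
      map_idealOfVars]
    rfl
  rw [hpow, hfrob]
  refine Ideal.map_le_iff_le_comap.trans ?_
  rw [Ideal.comap_map_quotientMk, sup_comm, pow_idealOfVars_eq_span, Ideal.span_le,
    Set.image_subset_iff]
  exact forall_congr' fun v => by simp

end FrobeniusPower

section Thresholds

variable {R : Type*} [CommRing R] {I J : Ideal R}

lemma fthresholdNu_le {q B : ℕ} (h : ∀ r, B < r → I ^ r ≤ frobeniusPower J q) :
    fthresholdNu I J q ≤ B :=
  csSup_le' fun r hr => not_lt.1 fun hBr => hr (h r hBr)

lemma pow_le_frobeniusPower_of_fthresholdNu_lt {q B r : ℕ}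
    (h : ∀ r, B < r → I ^ r ≤ frobeniusPower J q) (hr : fthresholdNu I J q < r) :
    I ^ r ≤ frobeniusPower J q :=
  not_not.1 (notMem_of_csSup_lt hr ⟨B, fun s hs => not_lt.1 fun hBs => hs (h s hBs)⟩)

lemma hasFThreshold_of_abs_sub_le {p : ℕ} (hp : 1 < p) {c C : ℝ}
    (h : ∀ j, |(fthresholdNu I J (p ^ (j + 1)) : ℝ) - c * p ^ (j + 1)| ≤ C) :
    HasFThreshold p I J c := by
  have hp' : (1 : ℝ) < p := by exact_mod_cast hp
  refine (tendsto_add_atTop_iff_nat 1).1 (tendsto_iff_norm_sub_tendsto_zero.2 ?_)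
  refine squeeze_zero (fun _ => norm_nonneg _) (fun j => ?_)
    (((tendsto_pow_atTop_atTop_of_one_lt hp').comp (tendsto_add_atTop_nat 1)).const_div_atTop C)
  have hq : (0 : ℝ) < (p : ℝ) ^ (j + 1) := by positivity
  rw [Real.norm_eq_abs, div_sub' hq.ne', abs_div, abs_of_pos hq, mul_comm _ c]
  exact div_le_div_of_nonneg_right (h j) hq.le

end Thresholds

section NuBounds

variable {k : Type} [Field k] {p j e N G w n D : ℕ} {f : Fin 3 → Polynomial k}

lemma BasicSyzygy.pow_le_frobeniusPower [ExpChar k p] (hf : BasicSyzygy n D f)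
    (hN : N + e = e * e + 1) (hG : G + 7 * e = e * e + 7) (he : 0 < e)
    (hw : 2 * e * w ≤ p ^ j + 2 * w) (hnD : 3 * n = 2 * D + w)
    (hn : IsSyzygyExponent e N (p ^ j) w n) {r : ℕ}
    (hr : (3 * (e + 1) * p ^ j + G * w + (2 * (e + 1) ^ 2 + 6 * N)) / (2 * (e + 1)) < r) :
    trivediMaxIdeal (e + 1) k ^ r ≤ frobeniusPower (trivediMaxIdeal (e + 1) k) (p ^ j) :=
  trivediMaxIdeal_pow_le_frobeniusPower_iff.2 fun _ hv =>
    hf.monomial_mem_of_le hN hG he (expChar_pow_pos k p j) hw hnD hn <| by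
      rw [hv, mul_comm _ r]
      exact ((Nat.div_lt_iff_lt_mul (by positivity)).1 hr).le

lemma BasicSyzygy.mul_fthresholdNu_le [ExpChar k p] (hf : BasicSyzygy n D f)
    (hN : N + e = e * e + 1) (hG : G + 7 * e = e * e + 7) (he : 0 < e)
    (hw : 2 * e * w ≤ p ^ j + 2 * w) (hnD : 3 * n = 2 * D + w)
    (hn : IsSyzygyExponent e N (p ^ j) w n) :
    2 * (e + 1) *
        fthresholdNu (trivediMaxIdeal (e + 1) k) (trivediMaxIdeal (e + 1) k) (p ^ j) ≤
      3 * (e + 1) * p ^ j + G * w + (2 * (e + 1) ^ 2 + 6 * N) :=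
  (Nat.mul_le_mul_left _
    (fthresholdNu_le fun _ => hf.pow_le_frobeniusPower hN hG he hw hnD hn)).trans
    (Nat.mul_div_le ..)

lemma BasicSyzygy.le_mul_fthresholdNu_add [ExpChar k p] (hf : BasicSyzygy n D f)
    (hN : N + e = e * e + 1) (hG : G + 7 * e = e * e + 7) (he : 0 < e) (heven : Even e)
    (hw : 2 * e * w ≤ p ^ j + 2 * w) (hnD : 3 * n = 2 * D + w)
    (hn : IsSyzygyExponent e N (p ^ j) w n) :
    3 * (e + 1) * p ^ j + G * w ≤
      2 * (e + 1) *
        fthresholdNu (trivediMaxIdeal (e + 1) k) (trivediMaxIdeal (e + 1) k) (p ^ j) +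
        (4 * (e + 1) * N + 6 * N) := by
  set ν := fthresholdNu (trivediMaxIdeal (e + 1) k) (trivediMaxIdeal (e + 1) k) (p ^ j)
  have hlt : ν < N * (ν / N + 1) := Nat.lt_mul_div_succ ν (pos_of_add_eq hN)
  have hle := pow_le_frobeniusPower_of_fthresholdNu_lt
    (fun _ => hf.pow_le_frobeniusPower hN hG he hw hnD hn) hlt
  by_contra! hcon
  obtain ⟨v, hv, hnotMem⟩ := hf.exists_monomial_notMem (l := ν / N + 1) hN hG he heven hnD hn (by
    have hdiv : N * (ν / N) ≤ ν := Nat.mul_div_le ..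
    nlinarith)
  exact hnotMem (trivediMaxIdeal_pow_le_frobeniusPower_iff.1 hle v hv)

/-- The syzygies for `p ^ (j + 1)` are the Frobenius powers of the one for `p`. -/
lemma BasicSyzygy.hasFThreshold [Fact p.Prime] [CharP k p] (hf : BasicSyzygy n D f)
    (hN : N + e = e * e + 1) (hG : G + 7 * e = e * e + 7) (he : 0 < e) (heven : Even e)
    (hep : 2 * e ≤ p + 2) (hnD : 3 * n = 2 * D + 1)
    (hn : IsSyzygyExponent e N p 1 n) :
    HasFThreshold p (trivediMaxIdeal (e + 1) k) (trivediMaxIdeal (e + 1) k)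
      ((3 * (e + 1) * p + G) / (2 * (e + 1) * p)) := by
  have hp : 0 < (p : ℝ) := by exact_mod_cast (Fact.out : p.Prime).pos
  refine hasFThreshold_of_abs_sub_le (Fact.out : p.Prime).one_lt
    (C := (2 * (e + 1) ^ 2 + 4 * (e + 1) * N + 6 * N) / (2 * (e + 1))) fun j => ?_
  have hfj := hf.pow_char (p := p) j
  have hw : 2 * e * p ^ j ≤ p ^ (j + 1) + 2 * p ^ j := by
    rw [pow_succ']
    nlinarith [Nat.zero_le (p ^ j)]
  have hnDj : 3 * (p ^ j * n) = 2 * (p ^ j * D) + p ^ j := by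
    linear_combination p ^ j * hnD
  have hnj : IsSyzygyExponent e N (p ^ (j + 1)) (p ^ j) (p ^ j * n) :=
    hn.imp (fun h => by linear_combination p ^ j * h) fun h => by linear_combination p ^ j * h
  have hupper := hfj.mul_fthresholdNu_le hN hG he hw hnDj hnj
  have hlower := hfj.le_mul_fthresholdNu_add hN hG he heven hw hnDj hnj
  set ν := fthresholdNu (trivediMaxIdeal (e + 1) k) (trivediMaxIdeal (e + 1) k) (p ^ (j + 1))
  have hscale : (ν : ℝ) - (3 * (e + 1) * p + G) / (2 * (e + 1) * p) * p ^ (j + 1) =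
      (2 * (e + 1) * ν - (3 * (e + 1) * p ^ (j + 1) + G * p ^ j)) / (2 * (e + 1)) := by
    field_simp
    ring
  rw [hscale, abs_div, abs_of_pos (by positivity : (0 : ℝ) < 2 * (e + 1))]
  refine div_le_div_of_nonneg_right (abs_le.2 ⟨?_, ?_⟩) (by positivity)
  · have : (3 * (e + 1) * p ^ (j + 1) + G * p ^ j : ℝ) ≤
        2 * (e + 1) * ν + (4 * (e + 1) * N + 6 * N) := by exact_mod_cast hlower
    nlinarith
  · have : (2 * (e + 1) * ν : ℝ) ≤
        3 * (e + 1) * p ^ (j + 1) + G * p ^ j + (2 * (e + 1) ^ 2 + 6 * N) := by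
      exact_mod_cast hupper
    have : (0 : ℝ) ≤ (e + 1) * N := by positivity
    linarith

end NuBounds

section Parameters

lemma exists_odd_mul_of_natCast_eq {N p : ℕ} (hp : Odd p) (hp2 : 2 ≤ p)
    (h : (p : ZMod N) = 2 ∨ (p : ZMod N) = -2) :
    ∃ m, Odd m ∧ (m * N + 2 = p ∨ m * N = p + 2) := by
  rcases h with h | h
  · obtain ⟨m, hm⟩ : N ∣ p - 2 := by
      rw [← ZMod.natCast_eq_zero_iff, Nat.cast_sub hp2, h, Nat.cast_ofNat, sub_self]
    have hodd : Odd (N * m) := hm ▸ Nat.Odd.sub_even hp2 hp even_two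
    exact ⟨m, Nat.Odd.of_mul_right hodd, .inl (by rw [mul_comm, ← hm, Nat.sub_add_cancel hp2])⟩
  · obtain ⟨m, hm⟩ : N ∣ p + 2 := by
      rw [← ZMod.natCast_eq_zero_iff, Nat.cast_add, h, Nat.cast_ofNat, neg_add_cancel]
    have hodd : Odd (N * m) := hm ▸ hp.add_even even_two
    exact ⟨m, Nat.Odd.of_mul_right hodd, .inr (by rw [hm, mul_comm])⟩

lemma le_add_two_of_natCast_eq {N p : ℕ} (hp : Odd p) (hp2 : 2 ≤ p)
    (h : (p : ZMod N) = 2 ∨ (p : ZMod N) = -2) : N ≤ p + 2 := by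
  obtain ⟨m, hm, hmp⟩ := exists_odd_mul_of_natCast_eq hp hp2 h
  have : N ≤ m * N := Nat.le_mul_of_pos_left N hm.pos
  omega

lemma exists_syzygy_parameters {e N p : ℕ} (he : 6 ≤ e) (heven : Even e)
    (hN : N + e = e * e + 1) (hp : Odd p) (hp2 : 2 ≤ p)
    (h : (p : ZMod N) = 2 ∨ (p : ZMod N) = -2) :
    ∃ n D, 3 * n = 2 * D + 1 ∧ D < p ∧
      IsSyzygyExponent e N p 1 n := by
  obtain ⟨m, hm, hmp⟩ := exists_odd_mul_of_natCast_eq hp hp2 h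
  obtain ⟨e, rfl⟩ := Nat.exists_eq_add_of_le' (Nat.one_le_of_lt he)
  have he' : Odd e := by simpa [parity_simps] using heven
  obtain ⟨D, hD⟩ : Odd (3 * (m * e)) := Odd.mul (by decide) (hm.mul he')
  have hme : 6 * (m * e) ≤ m * N := by
    rw [mul_left_comm]
    exact Nat.mul_le_mul_left m (by nlinarith)
  refine ⟨m * e, D, hD, by omega, hmp.imp (fun hmp => ?_) fun hmp => ?_⟩ <;>
    linear_combination e * hmp

lemma hasFThreshold_trivediMaxIdeal {k : Type} [Field k] {e N G p : ℕ} [CharP k p]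
    (he : 6 ≤ e) (heven : Even e) (hN : N + e = e * e + 1) (hG : G + 7 * e = e * e + 7)
    (hp : p.Prime) (hp2 : p ≠ 2) (h : (p : ZMod N) = 2 ∨ (p : ZMod N) = -2) :
    HasFThreshold p (trivediMaxIdeal (e + 1) k) (trivediMaxIdeal (e + 1) k)
      ((3 * (e + 1) * p + G) / (2 * (e + 1) * p)) := by
  have : Fact p.Prime := ⟨hp⟩
  have hodd := hp.odd_of_ne_two hp2
  obtain ⟨n, D, hnD, hDp, hn⟩ := exists_syzygy_parameters he heven hN hodd hp.two_le h
  obtain ⟨f, hf⟩ := exists_basicSyzygy (k := k) (p := p) hnD hDp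
  have hNp := le_add_two_of_natCast_eq hodd hp.two_le h
  exact hf.hasFThreshold hN hG (by omega) heven (by nlinarith) hnD hn

lemma prime_dvd_den_div {p : ℕ} (hp : p.Prime) {a b : ℤ} (hb : b ≠ 0) (ha : ¬ (p : ℤ) ∣ a) :
    p ∣ ((a : ℚ) / (p * b)).den := by
  set c : ℚ := a / (p * b)
  have hp0 : (p : ℚ) ≠ 0 := by exact_mod_cast hp.ne_zero
  have hb0 : (b : ℚ) ≠ 0 := by exact_mod_cast hb
  have hc : (c.num : ℚ) * (p * b) = c.den * a := by
    rw [← Rat.den_mul_eq_num, mul_assoc, div_mul_cancel₀ _ (mul_ne_zero hp0 hb0)]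
  have hdvd : (p : ℤ) ∣ c.den * a :=
    ⟨c.num * b, by rw [mul_left_comm]; exact_mod_cast hc.symm⟩
  exact Int.natCast_dvd_natCast.1
    (((Nat.prime_iff_prime_int.1 hp).dvd_or_dvd hdvd).resolve_right ha)

/-- Since `0 < G < p`, the prime `p` does not cancel. -/
lemma prime_dvd_den_threshold {e N G p : ℕ} (he : 6 ≤ e) (hN : N + e = e * e + 1)
    (hG : G + 7 * e = e * e + 7) (hp : p.Prime) (hNp : N ≤ p + 2) :
    p ∣ ((3 * (e + 1) * p + G) / (2 * (e + 1) * p) : ℚ).den := by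
  have hGp : ¬ (p : ℤ) ∣ 3 * (e + 1) * p + G := by
    rw [Int.dvd_add_right (Dvd.intro_left _ rfl), Int.natCast_dvd_natCast]
    exact Nat.not_dvd_of_pos_of_lt (by nlinarith) (by omega)
  have := prime_dvd_den_div hp (b := 2 * (e + 1)) (by positivity) hGp
  push_cast at this
  rwa [mul_comm (p : ℚ)] at this

lemma threshold_eq {e G : ℕ} (p : ℕ) (hG : G + 7 * e = e * e + 7) :
    (3 * (p : ℚ) * ((e + 1 : ℕ) : ℚ) + ((e + 1 : ℕ) : ℚ) ^ 2 - 9 * ((e + 1 : ℕ) : ℚ) + 15) /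
      (2 * (p : ℚ) * ((e + 1 : ℕ) : ℚ)) = (3 * (e + 1) * p + G) / (2 * (e + 1) * p) := by
  have : (G : ℚ) + 7 * e = e * e + 7 := by exact_mod_cast hG
  push_cast
  congr 1
  · linear_combination -this
  · ring

end Parameters

end Trivedi

theorem trivedi_example_fthreshold_general (d p : ℕ) (hd : 7 ≤ d) (hodd : Odd d)
    (hp : p.Prime) (hp2 : p ≠ 2)
    (hcong : (p : ZMod (d ^ 2 - 3 * d + 3)) = 2 ∨
      (p : ZMod (d ^ 2 - 3 * d + 3)) = -2)
    (k : Type) [Field k] [CharP k p] :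
    HasFThreshold p (trivediMaxIdeal d k) (trivediMaxIdeal d k)
      (((3 * (p : ℚ) * (d : ℚ) + (d : ℚ) ^ 2 - 9 * (d : ℚ) + 15) /
        (2 * (p : ℚ) * (d : ℚ)) : ℚ) : ℝ) ∧
    p ∣ ((3 * (p : ℚ) * (d : ℚ) + (d : ℚ) ^ 2 - 9 * (d : ℚ) + 15) /
        (2 * (p : ℚ) * (d : ℚ)) : ℚ).den := by
  obtain ⟨e, rfl⟩ := Nat.exists_eq_add_of_le' (Nat.one_le_of_lt hd)
  have he : 6 ≤ e := Nat.le_of_succ_le_succ hd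
  have heven : Even e := by simpa [parity_simps] using hodd
  have hN : (e + 1) ^ 2 - 3 * (e + 1) + 3 + e = e * e + 1 := by
    have : 3 * (e + 1) ≤ (e + 1) ^ 2 := by nlinarith
    zify [this]
    ring
  obtain ⟨G, hG⟩ : ∃ G, G + 7 * e = e * e + 7 :=
    ⟨e * e + 7 - 7 * e, Nat.sub_add_cancel (by nlinarith)⟩
  rw [Trivedi.threshold_eq p hG]
  refine ⟨?_, Trivedi.prime_dvd_den_threshold he hN hG hp
    (Trivedi.le_add_two_of_natCast_eq (hp.odd_of_ne_two hp2) hp.two_le hcong)⟩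
  push_cast
  exact Trivedi.hasFThreshold_trivediMaxIdeal he heven hN hG hp hp2 hcong

/-- Remark 4.1, after [TrW, Example 6.9].  For odd `d ≥ 7` and a prime
`p ≥ d²` with `p ≡ ±2 (mod d² - 3d + 3)`, the `F`-threshold of the maximal ideal
`𝐦 = (x,y,z)` of `R_p = k[x,y,z]/(x^{d-1}y + y^{d-1}z + z^{d-1}x)` is
`c^𝐦(𝐦) = (3pd + d² - 9d + 15)/(2pd)`; in particular `p` divides the denominator of
`c^𝐦(𝐦)` in lowest terms (but this denominator need not be a power of `p`). -/
theorem trivedi_example_fthreshold (d p : ℕ) (hd : 7 ≤ d) (hodd : Odd d)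
    (hp : p.Prime) (hpd : d ^ 2 ≤ p)
    (hcong : (p : ZMod (d ^ 2 - 3 * d + 3)) = 2 ∨
      (p : ZMod (d ^ 2 - 3 * d + 3)) = -2)
    (k : Type) [Field k] [IsAlgClosed k] [CharP k p] :
    HasFThreshold p (trivediMaxIdeal d k) (trivediMaxIdeal d k)
      (((3 * (p : ℚ) * (d : ℚ) + (d : ℚ) ^ 2 - 9 * (d : ℚ) + 15) /
        (2 * (p : ℚ) * (d : ℚ)) : ℚ) : ℝ) ∧
    p ∣ ((3 * (p : ℚ) * (d : ℚ) + (d : ℚ) ^ 2 - 9 * (d : ℚ) + 15) /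
        (2 * (p : ℚ) * (d : ℚ)) : ℚ).den :=
  trivedi_example_fthreshold_general d p hd hodd hp (by rintro rfl; nlinarith) hcong k
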